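/- Let S ⊂ ℝ^k be a halfspace, A ∈ (APW^k_S)^{p×m}, B ∈ (APW^k_S)^{p×p} with B invertible in (APW^k)^{p×p}, γ > 0, and assume A and B are left coprime over APW^k_S. Let Λ' be any additive subgroup of ℝ^k containing σ(A) ∪ σ(B). If the operator T(A)_{S,Λ'} (T(A)_{S,Λ'})* − γ^{−2} T(B)_{S,Λ'} (T(B)_{S,Λ'})* on (B^k_{S∩Λ'})^{p×1} is positive definite and invertible, then there exists F ∈ (APW^k_{S∩Λ'})^{m×p} such that sup_{t∈ℝ^k} ‖F(t)‖ ≤ γ and A F = B. -/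

import Mathlib

/- Almost periodic functions of `k` real variables, their Bohr-Fourier
coefficients and spectra, the Wiener algebra, and halfspaces. -/

open MeasureTheory Filter BoundedContinuousFunction

noncomputable section

/-- The Banach algebra of bounded continuous functions `ℝ^k → ℂ` (sup norm). -/
abbrev APB (k : ℕ) := BoundedContinuousFunction (Fin k → ℝ) ℂ

/-- The elementary exponential `e_λ(x) = e^{i⟨λ,x⟩}` as a bounded continuous function. -/
def apExp (k : ℕ) (lam : Fin k → ℝ) : APB k :=
  BoundedContinuousFunction.ofNormedAddCommGroup
    (fun x => Complex.exp (Complex.I * ((∑ j, lam j * x j : ℝ) : ℂ)))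
    (by fun_prop) 1
    (fun x => by
      simp [Complex.norm_exp, Complex.mul_re])

/-- `AP^k`: the closed subalgebra of `L^∞`-type bounded continuous functions
generated by all exponentials `e_λ`, `λ ∈ ℝ^k`. -/
def APalg (k : ℕ) : Subalgebra ℂ (APB k) :=
  (Algebra.adjoin ℂ (Set.range (apExp k))).topologicalClosure

/-- The Bohr-Fourier coefficient
`f_λ = lim_{T→∞} (2T)^{-k} ∫_{[-T,T]^k} e^{-i⟨λ,x⟩} f(x) dx`. -/
def bohrCoeff (k : ℕ) (f : (Fin k → ℝ) → ℂ) (lam : Fin k → ℝ) : ℂ :=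
  limUnder atTop (fun T : ℝ =>
    (((2 * T) ^ k : ℝ) : ℂ)⁻¹ *
      ∫ x in Set.Icc (fun _ => -T : Fin k → ℝ) (fun _ => T),
        Complex.exp (-(Complex.I * ((∑ j, lam j * x j : ℝ) : ℂ))) * f x)

/-- The Bohr-Fourier spectrum `σ(f) = {λ : f_λ ≠ 0}`. -/
def bohrSpectrum (k : ℕ) (f : (Fin k → ℝ) → ℂ) : Set (Fin k → ℝ) :=
  {lam | bohrCoeff k f lam ≠ 0}

/-- Membership in `AP^k_Δ = {f ∈ AP^k : σ(f) ⊆ Δ}`. -/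
def APmem (k : ℕ) (Δ : Set (Fin k → ℝ)) (f : APB k) : Prop :=
  f ∈ APalg k ∧ bohrSpectrum k ⇑f ⊆ Δ

/-- Membership in the Wiener algebra `APW^k_Δ`: almost periodic with spectrum
in `Δ` and absolutely convergent Bohr-Fourier series. -/
def APWmem (k : ℕ) (Δ : Set (Fin k → ℝ)) (f : APB k) : Prop :=
  APmem k Δ f ∧ Summable (fun lam => ‖bohrCoeff k (⇑f) lam‖)

/-- The Wiener norm `‖f‖_W = ∑_λ |f_λ|`. -/
def wienerNorm (k : ℕ) (f : (Fin k → ℝ) → ℂ) : ℝ :=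
  ∑' lam, ‖bohrCoeff k f lam‖

/-- A halfspace `S ⊂ ℝ^k`: `ℝ^k = S ∪ (-S)`, `S ∩ (-S) = {0}`, and `S` is
closed under addition and under multiplication by nonnegative reals. -/
structure IsHalfspace (k : ℕ) (S : Set (Fin k → ℝ)) : Prop where
  union : S ∪ -S = Set.univ
  inter : S ∩ -S = {0}
  add_mem : ∀ x ∈ S, ∀ y ∈ S, x + y ∈ S
  smul_mem : ∀ x ∈ S, ∀ a : ℝ, 0 ≤ a → a • x ∈ S

/- The Besicovitch space and Toeplitz operators.  The Besicovitch space `B^k`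
is the Hilbert-space completion of `AP^k` in the inner product `⟨f,g⟩=M{f·ḡ}`;
the exponentials `e_λ` form an orthonormal basis, so `(B^k_Λ)^{n×1}` is
canonically identified (via Bohr-Fourier coefficients) with `ℓ²(Fin n × Λ)`. -/

/-- The column Besicovitch space `(B^k_Λ)^{n×1} ≅ ℓ²(Fin n × Λ)`. -/
abbrev BesCol (k n : ℕ) (Λ : Set (Fin k → ℝ)) : Type :=
  lp (fun _ : Fin n × ↥Λ => ℂ) 2

/-- `T` is the Toeplitz operator
`T(F)_{S,Λ} : (B^k_{S∩Λ})^{n×1} → (B^k_{S∩Λ})^{m×1}`, `φ ↦ Π_{S∩Λ}(Fφ)`,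
characterized by its matrix with respect to the orthonormal basis of
exponentials: `⟪e_ν δ_i , T(e_μ δ_j)⟫ = (F i j)_{ν-μ}` (Bohr-Fourier
coefficient of the `(i,j)` entry at `ν - μ`). -/
def RepresentsToeplitz (k : ℕ) (S Λ : Set (Fin k → ℝ)) (m n : ℕ)
    (F : Matrix (Fin m) (Fin n) (APB k))
    (T : BesCol k n (S ∩ Λ) →L[ℂ] BesCol k m (S ∩ Λ)) : Prop :=
  ∀ (j : Fin n) (μ : ↥(S ∩ Λ)) (i : Fin m) (ν : ↥(S ∩ Λ)),
    (inner ℂ (lp.single 2 (i, ν) (1 : ℂ)) (T (lp.single 2 (j, μ) (1 : ℂ))) : ℂ) =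
      bohrCoeff k (⇑(F i j)) ((ν : Fin k → ℝ) - (μ : Fin k → ℝ))

/-- Invertibility of a continuous linear map. -/
def CLMInvertible {E F : Type*} [NormedAddCommGroup E] [NormedAddCommGroup F]
    [NormedSpace ℂ E] [NormedSpace ℂ F] (T : E →L[ℂ] F) : Prop :=
  ∃ Tinv : F →L[ℂ] E,
    Tinv.comp T = ContinuousLinearMap.id ℂ E ∧ T.comp Tinv = ContinuousLinearMap.id ℂ F

/-- `sup_{t ∈ ℝ^k} ‖F(t)‖ ≤ γ`, where `‖·‖` is the operator norm of a matrix
with respect to Euclidean vector norms. -/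
def MatrixSupOpNormLE (k m n : ℕ) (F : Matrix (Fin m) (Fin n) (APB k))
    (γ : ℝ) : Prop :=
  ∀ (t : Fin k → ℝ) (v : Fin n → ℂ),
    Real.sqrt (∑ i, ‖∑ j, F i j t * v j‖ ^ 2) ≤
      γ * Real.sqrt (∑ j, ‖v j‖ ^ 2)

namespace ToeplitzCorona

/-- Central elements are scalars modulo a maximal left ideal of a Banach algebra. -/
theorem exists_sub_algebraMap_mem {R : Type*} [NormedRing R] [NormedAlgebra ℂ R] [CompleteSpace R]
    (L : Ideal R) [hL : L.IsMaximal] (z : R) (hz : ∀ a, z * a = a * z) :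
    ∃ c : ℂ, z - algebraMap ℂ R c ∈ L := by
  by_contra! hcon
  have hL1 : (1 : R) ∉ L := (Ideal.ne_top_iff_one L).1 hL.ne_top
  set N : Submodule ℂ R := L.restrictScalars ℂ with hN
  have hmemN : ∀ x, x ∈ N ↔ x ∈ L := fun x => Iff.rfl
  have hNc : IsClosed (N : Set R) := Ideal.IsMaximal.isClosed (I := L)
  have hcomm : ∀ (c : ℂ) (a : R), (z - algebraMap ℂ R c) * a = a * (z - algebraMap ℂ R c) := by
    intro c a
    rw [sub_mul, mul_sub, hz, Algebra.commutes]
  have hstab : N ≤ N.comap (LinearMap.mulLeft ℂ z) := by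
    intro a ha
    exact L.mul_mem_left z ha
  let Zl : (R ⧸ N) →ₗ[ℂ] (R ⧸ N) := N.mapQ N (LinearMap.mulLeft ℂ z) hstab
  let Z : (R ⧸ N) →L[ℂ] (R ⧸ N) := Zl.mkContinuous ‖z‖ (by
    intro x
    refine le_of_forall_pos_le_add fun ε hε => ?_
    obtain ⟨m, rfl, hm⟩ := Submodule.Quotient.norm_mk_lt (S := N) x
      (ε := ε / (‖z‖ + 1)) (by positivity)
    have h1 : Zl (Submodule.Quotient.mk m) = Submodule.Quotient.mk (z * m) := rfl
    rw [h1]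
    calc ‖(Submodule.Quotient.mk (z * m) : R ⧸ N)‖ ≤ ‖z * m‖ := Submodule.Quotient.norm_mk_le N _
      _ ≤ ‖z‖ * ‖m‖ := norm_mul_le _ _
      _ ≤ ‖z‖ * (‖(Submodule.Quotient.mk m : R ⧸ N)‖ + ε / (‖z‖ + 1)) := by gcongr
      _ ≤ _ := by
        rw [mul_add]
        gcongr
        rw [mul_div_assoc', div_le_iff₀ (by positivity)]
        nlinarith [norm_nonneg z])
  have hnt : Nontrivial (R ⧸ N) := by
    refine Submodule.Quotient.nontrivial_iff.2 fun h => hL1 ?_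
    have : (1 : R) ∈ N := by rw [h]; trivial
    exact this
  obtain ⟨c, hc⟩ := spectrum.nonempty Z
  apply hc
  have hop : ∀ m : R, (algebraMap ℂ ((R ⧸ N) →L[ℂ] (R ⧸ N)) c - Z) (Submodule.Quotient.mk m) =
      Submodule.Quotient.mk (-((z - algebraMap ℂ R c) * m)) := by
    intro m
    have h1 : Z (Submodule.Quotient.mk m) = Submodule.Quotient.mk (z * m) := rfl
    rw [sub_mul, neg_sub, _root_.sub_apply, h1, Submodule.Quotient.mk_sub,
      ← Algebra.smul_def, Submodule.Quotient.mk_smul]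
    rfl
  have hbij : Function.Bijective (algebraMap ℂ ((R ⧸ N) →L[ℂ] (R ⧸ N)) c - Z) := by
    constructor
    · rw [injective_iff_map_eq_zero]
      intro x
      obtain ⟨m, rfl⟩ := Submodule.Quotient.mk_surjective _ x
      intro h
      rw [hop, Submodule.Quotient.mk_eq_zero, hmemN, neg_mem_iff, hcomm] at h
      rw [Submodule.Quotient.mk_eq_zero, hmemN]
      by_contra hm
      obtain ⟨y, i, hi, hyi⟩ : ∃ y, ∃ i ∈ L, y * m + i = 1 := by
        have h2 : L ⊔ Ideal.span {m} = ⊤ := by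
          refine hL.out.2 _ (lt_of_le_of_ne le_sup_left fun h3 => hm ?_)
          rw [h3]
          exact Ideal.mem_sup_right (Ideal.mem_span_singleton_self m)
        have h4 : (1 : R) ∈ L ⊔ Ideal.span {m} := by rw [h2]; trivial
        obtain ⟨i, hi, w, hw, hiw⟩ := Submodule.mem_sup.1 h4
        obtain ⟨y, rfl⟩ := Ideal.mem_span_singleton'.1 hw
        exact ⟨y, i, hi, by rw [add_comm, hiw]⟩
      refine hcon c ?_
      have h5 : z - algebraMap ℂ R c =
          y * (m * (z - algebraMap ℂ R c)) + (z - algebraMap ℂ R c) * i := by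
        rw [hcomm c i, ← mul_assoc, ← add_mul, hyi, one_mul]
      rw [h5]
      exact L.add_mem (L.mul_mem_left _ h) (L.mul_mem_left _ hi)
    · intro x
      obtain ⟨m, rfl⟩ := Submodule.Quotient.mk_surjective _ x
      have h2 : L ⊔ Ideal.span {z - algebraMap ℂ R c} = ⊤ := by
        refine hL.out.2 _ (lt_of_le_of_ne le_sup_left fun h3 => hcon c ?_)
        rw [h3]
        exact Ideal.mem_sup_right (Ideal.mem_span_singleton_self _)
      have h4 : (1 : R) ∈ L ⊔ Ideal.span {z - algebraMap ℂ R c} := by rw [h2]; trivial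
      obtain ⟨i, hi, w, hw, hiw⟩ := Submodule.mem_sup.1 h4
      obtain ⟨y, rfl⟩ := Ideal.mem_span_singleton'.1 hw
      refine ⟨Submodule.Quotient.mk (-(m * y)), ?_⟩
      rw [hop, Submodule.Quotient.eq, hmemN, hcomm]
      have : -(-(m * y) * (z - algebraMap ℂ R c)) - m = - (m * i) := by
        have hm : m * (i + y * (z - algebraMap ℂ R c)) = m := by rw [hiw, mul_one]
        rw [neg_mul, neg_neg, mul_assoc, eq_neg_iff_add_eq_zero]
        rw [mul_add] at hm
        rw [sub_add_eq_add_sub, sub_eq_zero, add_comm, hm]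
      rw [this]
      exact L.neg_mem (L.mul_mem_left _ hi)
  let e := ContinuousLinearEquiv.ofBijective (algebraMap ℂ ((R ⧸ N) →L[ℂ] (R ⧸ N)) c - Z)
    (LinearMap.ker_eq_bot.2 hbij.1) (LinearMap.range_eq_top.2 hbij.2)
  exact ⟨⟨_, (e.symm : (R ⧸ N) →L[ℂ] (R ⧸ N)), e.coe_comp_coe_symm, e.coe_symm_comp_coe⟩, rfl⟩

/-- Bochner-Phillips: a series with central unitary frequencies is left invertible in a Banach
algebra as soon as it is left invertible at every character. -/
theorem exists_left_inverse_of_characters {R Γ J : Type*} [NormedRing R] [NormedAlgebra ℂ R]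
    [CompleteSpace R] [AddCommGroup Γ] (z : Γ → R) (hz0 : z 0 = 1)
    (hzadd : ∀ a b, z (a + b) = z a * z b) (hzc : ∀ g a, z g * a = a * z g)
    (hz1 : ∀ g, ‖z g‖ ≤ 1) (b : J → R) (d : J → Γ) (hb : Summable fun j => ‖b j‖)
    (h : ∀ χ : Γ → ℂ, χ 0 = 1 → (∀ x y, χ (x + y) = χ x * χ y) → (∀ x, ‖χ x‖ = 1) →
      ∃ a, a * (∑' j, χ (d j) • b j) = 1) :
    ∃ a, a * (∑' j, b j * z (d j)) = 1 := by
  classical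
  by_contra! hcon
  have hsp : Ideal.span {∑' j, b j * z (d j)} ≠ (⊤ : Ideal R) := by
    rw [Ideal.ne_top_iff_one]
    intro h1
    obtain ⟨a, ha⟩ := Ideal.mem_span_singleton'.1 h1
    exact hcon a ha
  obtain ⟨L, hL, hle⟩ := Ideal.exists_le_maximal _ hsp
  have hX : (∑' j, b j * z (d j)) ∈ L := hle (Ideal.mem_span_singleton_self _)
  have hL1 : (1 : R) ∉ L := (Ideal.ne_top_iff_one L).1 hL.ne_top
  have hLc : IsClosed (L : Set R) := Ideal.IsMaximal.isClosed (I := L)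
  choose χ hχ using fun g => exists_sub_algebraMap_mem L (z g) (hzc g)
  have huniq : ∀ c c' : ℂ, algebraMap ℂ R c - algebraMap ℂ R c' ∈ L → c = c' := by
    intro c c' hcc
    by_contra hne
    apply hL1
    have h2 : algebraMap ℂ R (c - c')⁻¹ * (algebraMap ℂ R c - algebraMap ℂ R c') = 1 := by
      rw [← map_sub, ← map_mul, inv_mul_cancel₀ (sub_ne_zero.2 hne), map_one]
    rw [← h2]
    exact L.mul_mem_left _ hcc
  have h0 : χ 0 = 1 := by
    apply (huniq _ _ _).symm
    have := hχ 0
    rwa [hz0, ← map_one (algebraMap ℂ R)] at this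
  have hadd : ∀ x y, χ (x + y) = χ x * χ y := by
    intro x y
    apply huniq
    have h1 := hχ (x + y)
    have h2 : z x * z y - algebraMap ℂ R (χ x * χ y) ∈ L := by
      have : z x * z y - algebraMap ℂ R (χ x * χ y) =
          z x * (z y - algebraMap ℂ R (χ y)) +
            algebraMap ℂ R (χ y) * (z x - algebraMap ℂ R (χ x)) := by
        rw [mul_sub, mul_sub, ← map_mul, mul_comm (χ y), hzc x (algebraMap ℂ R (χ y))]
        abel
      rw [this]
      exact L.add_mem (L.mul_mem_left _ (hχ y)) (L.mul_mem_left _ (hχ x))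
    rw [hzadd] at h1
    have := L.sub_mem h2 h1
    simpa using this
  have hle1 : ∀ x, ‖χ x‖ ≤ 1 := by
    intro x
    by_contra! hlt
    have hne : χ x ≠ 0 := by
      intro h; rw [h, norm_zero] at hlt; linarith
    have hsmall : ‖(χ x)⁻¹ • z x‖ < 1 := by
      calc ‖(χ x)⁻¹ • z x‖ ≤ ‖χ x‖⁻¹ * 1 := by
            rw [norm_smul, norm_inv]; gcongr; exact hz1 x
        _ < 1 := by rw [mul_one]; exact inv_lt_one_of_one_lt₀ hlt
    obtain ⟨u, hu⟩ := isUnit_one_sub_of_norm_lt_one hsmall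
    apply hL1
    have h3 : (1 - (χ x)⁻¹ • z x) = algebraMap ℂ R (-(χ x)⁻¹) * (z x - algebraMap ℂ R (χ x)) := by
      rw [mul_sub, ← map_mul, ← Algebra.smul_def, neg_mul, inv_mul_cancel₀ hne]
      simp [neg_smul]
      abel
    have h4 : (1 - (χ x)⁻¹ • z x) ∈ L := by rw [h3]; exact L.mul_mem_left _ (hχ x)
    rw [← hu] at h4
    have := L.mul_mem_left (↑u⁻¹) h4
    simpa using this
  have heq1 : ∀ x, ‖χ x‖ = 1 := by
    intro x
    have h1 : ‖χ x‖ * ‖χ (-x)‖ = 1 := by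
      rw [← norm_mul, ← hadd, add_neg_cancel, h0, norm_one]
    nlinarith [hle1 x, hle1 (-x), norm_nonneg (χ x), norm_nonneg (χ (-x))]
  obtain ⟨a, ha⟩ := h χ h0 hadd heq1
  apply hL1
  rw [← ha]
  apply L.mul_mem_left
  have hs1 : Summable fun j => b j * z (d j) := by
    refine Summable.of_norm_bounded hb fun j => (norm_mul_le _ _).trans ?_
    exact mul_le_of_le_one_right (norm_nonneg _) (hz1 _)
  have hs2 : Summable fun j => χ (d j) • b j := by
    refine Summable.of_norm_bounded hb fun j => ?_
    rw [norm_smul, heq1, one_mul]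
  have hdiff : (∑' j, b j * z (d j)) - (∑' j, χ (d j) • b j) ∈ L := by
    rw [← hs1.tsum_sub hs2]
    refine hLc.mem_of_tendsto (hs1.sub hs2).hasSum (Eventually.of_forall fun s => ?_)
    refine L.sum_mem fun j _ => ?_
    have : b j * z (d j) - χ (d j) • b j = b j * (z (d j) - algebraMap ℂ R (χ (d j))) := by
      rw [mul_sub, ← Algebra.commutes, ← Algebra.smul_def]
    rw [this]
    exact L.mul_mem_left _ (hχ _)
  have := L.sub_mem hX hdiff
  simpa using this

end ToeplitzCorona

namespace ToeplitzCorona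

open scoped Topology

variable {k : ℕ}

theorem apExp_apply (lam x : Fin k → ℝ) :
    apExp k lam x = Complex.exp (Complex.I * ((∑ j, lam j * x j : ℝ) : ℂ)) := rfl

theorem apExp_zero : apExp k 0 = 1 := by
  ext x
  simp [apExp_apply]

theorem apExp_add (a b : Fin k → ℝ) : apExp k (a + b) = apExp k a * apExp k b := by
  ext x
  rw [BoundedContinuousFunction.mul_apply, apExp_apply, apExp_apply, apExp_apply, ← Complex.exp_add,
    ← mul_add]
  congr 2
  simp only [Pi.add_apply, add_mul, Finset.sum_add_distrib, Complex.ofReal_add]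

theorem star_apExp (a : Fin k → ℝ) : star (apExp k a) = apExp k (-a) := by
  ext x
  rw [BoundedContinuousFunction.star_apply, apExp_apply, apExp_apply]
  simp [← Complex.exp_conj]

theorem norm_apExp_le (a : Fin k → ℝ) : ‖apExp k a‖ ≤ 1 :=
  BoundedContinuousFunction.norm_ofNormedAddCommGroup_le _ zero_le_one _

theorem apExp_add_arg (lam x a : Fin k → ℝ) :
    apExp k lam (x + a) = apExp k lam a * apExp k lam x := by
  rw [apExp_apply, apExp_apply, apExp_apply, ← Complex.exp_add, ← mul_add]
  congr 2
  rw [← Complex.ofReal_add, ← Finset.sum_add_distrib]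
  congr 1
  exact Finset.sum_congr rfl fun j _ => by simp only [Pi.add_apply]; ring

/-- The average of `f` over the box `[-T,T]^k`. -/
def boxAvg (T : ℝ) (f : APB k) : ℂ :=
  (((2 * T) ^ k : ℝ) : ℂ)⁻¹ * ∫ x in Set.Icc (fun _ => -T : Fin k → ℝ) (fun _ => T), f x

theorem bohrCoeff_eq_limUnder (f : APB k) (lam : Fin k → ℝ) :
    bohrCoeff k f lam = limUnder atTop fun T : ℝ => boxAvg T (apExp k (-lam) * f) := by
  unfold bohrCoeff boxAvg
  congr 1
  ext T
  congr 2
  ext x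
  rw [BoundedContinuousFunction.mul_apply, apExp_apply]
  simp

theorem integrableOn_box (T : ℝ) (f : APB k) :
    IntegrableOn (fun x => f x) (Set.Icc (fun _ => -T : Fin k → ℝ) (fun _ => T)) :=
  f.continuous.continuousOn.integrableOn_compact isCompact_Icc

theorem boxAvg_add (T : ℝ) (f g : APB k) : boxAvg T (f + g) = boxAvg T f + boxAvg T g := by
  unfold boxAvg
  rw [← mul_add, ← integral_add (integrableOn_box T f) (integrableOn_box T g)]
  rfl

theorem boxAvg_smul (T : ℝ) (c : ℂ) (f : APB k) : boxAvg T (c • f) = c * boxAvg T f := by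
  unfold boxAvg
  rw [mul_left_comm c, ← integral_const_mul c]
  rfl

theorem volume_box {T : ℝ} (hT : 0 < T) :
    volume.real (Set.Icc (fun _ => -T : Fin k → ℝ) (fun _ => T)) = (2 * T) ^ k := by
  rw [measureReal_def, Real.volume_Icc_pi_toReal (fun _ => by linarith)]
  simp [two_mul]

theorem norm_boxAvg_le {T : ℝ} (hT : 0 < T) (f : APB k) : ‖boxAvg T f‖ ≤ ‖f‖ := by
  unfold boxAvg
  have h := norm_setIntegral_le_of_norm_le_const (μ := volume) (f := fun x => f x) (C := ‖f‖)
    (s := Set.Icc (fun _ => -T : Fin k → ℝ) (fun _ => T)) isCompact_Icc.measure_lt_top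
    (fun x _ => f.norm_coe_le_norm x)
  rw [volume_box hT] at h
  have hpos : 0 < (2 * T) ^ k := by positivity
  rw [norm_mul, norm_inv, Complex.norm_real, Real.norm_of_nonneg hpos.le, inv_mul_le_iff₀ hpos,
    mul_comm]
  exact h

theorem le_re_boxAvg {T : ℝ} (hT : 0 < T) (f : APB k) {c : ℝ} (hc : ∀ x, c ≤ (f x).re) :
    c ≤ (boxAvg T f).re := by
  unfold boxAvg
  have hpos : 0 < (2 * T) ^ k := by positivity
  rw [← Complex.ofReal_inv, Complex.re_ofReal_mul, le_inv_mul_iff₀ hpos]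
  have h1 : (∫ x in Set.Icc (fun _ => -T : Fin k → ℝ) (fun _ => T), f x).re =
      ∫ x in Set.Icc (fun _ => -T : Fin k → ℝ) (fun _ => T), (f x).re :=
    (integral_re (integrableOn_box T f)).symm
  rw [h1, ← volume_box hT, mul_comm]
  have := setIntegral_mono_on (μ := volume) (f := fun _ => c) (g := fun x => (f x).re)
    (s := Set.Icc (fun _ => -T : Fin k → ℝ) (fun _ => T))
    (integrableOn_const isCompact_Icc.measure_lt_top.ne)
    (Integrable.re (integrableOn_box T f)) measurableSet_Icc (fun x _ => hc x)
  rw [setIntegral_const, smul_eq_mul, mul_comm] at this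
  exact this

theorem tendsto_intervalAvg_exp (l : ℝ) :
    Tendsto (fun T : ℝ => ((2 * T : ℝ) : ℂ)⁻¹ *
      ∫ x in Set.Icc (-T) T, Complex.exp (Complex.I * ((l * x : ℝ) : ℂ))) atTop
      (𝓝 (if l = 0 then 1 else 0)) := by
  split_ifs with hl
  · subst hl
    refine tendsto_const_nhds.congr' ?_
    filter_upwards [eventually_gt_atTop 0] with T hT
    simp only [zero_mul, Complex.ofReal_zero, mul_zero, Complex.exp_zero, setIntegral_const,
      Real.volume_real_Icc]
    rw [max_eq_left (by linarith)]
    have : (T : ℂ) ≠ 0 := by exact_mod_cast hT.ne'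
    simp
    field_simp
    ring
  · refine squeeze_zero_norm' (a := fun T : ℝ => |l|⁻¹ * T⁻¹) ?_ ?_
    · filter_upwards [eventually_gt_atTop 0] with T hT
      have hI : (Complex.I * (l : ℂ)) ≠ 0 := by
        simp [hl]
      have h1 : ∫ x in Set.Icc (-T) T, Complex.exp (Complex.I * ((l * x : ℝ) : ℂ)) =
          (Complex.exp (Complex.I * l * (T : ℝ)) - Complex.exp (Complex.I * l * ((-T : ℝ) : ℂ)))
            / (Complex.I * l) := by
        rw [← integral_exp_mul_complex hI, intervalIntegral.integral_of_le (by linarith),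
          integral_Icc_eq_integral_Ioc]
        congr 1
        ext x
        push_cast
        ring_nf
      rw [h1, norm_mul, norm_div, norm_inv, Complex.norm_real, Real.norm_of_nonneg (by positivity)]
      have h2 : ∀ s : ℝ, ‖Complex.exp (Complex.I * l * (s : ℝ))‖ = 1 := by
        intro s
        simp [Complex.norm_exp]
      have h3 := norm_sub_le (Complex.exp (Complex.I * l * (T : ℝ)))
        (Complex.exp (Complex.I * l * ((-T : ℝ) : ℂ)))
      rw [h2, h2] at h3
      have h4 : ‖Complex.I * (l : ℂ)‖ = |l| := by simp
      rw [h4]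
      have hl' : 0 < |l| := abs_pos.2 hl
      calc (2 * T)⁻¹ * (_ / |l|) ≤ (2 * T)⁻¹ * ((1 + 1) / |l|) := by gcongr
        _ = _ := by field_simp; norm_num
    · simpa using (tendsto_inv_atTop_zero (𝕜 := ℝ)).const_mul (|l|⁻¹)

theorem boxAvg_apExp (T : ℝ) (lam : Fin k → ℝ) :
    boxAvg T (apExp k lam) = ∏ j, ((2 * T : ℝ) : ℂ)⁻¹ *
      ∫ x in Set.Icc (-T) T, Complex.exp (Complex.I * ((lam j * x : ℝ) : ℂ)) := by
  rw [Finset.prod_mul_distrib, Finset.prod_const, Finset.card_univ, Fintype.card_fin]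
  unfold boxAvg
  congr 1
  · push_cast; rw [inv_pow]
  · rw [← Set.pi_univ_Icc, volume_pi, Measure.restrict_pi_pi,
      ← integral_fintype_prod_eq_prod (𝕜 := ℂ)]
    congr 1
    ext x
    rw [apExp_apply, ← Complex.exp_sum, ← Finset.mul_sum]
    push_cast
    rfl

theorem tendsto_boxAvg_apExp (lam : Fin k → ℝ) :
    Tendsto (fun T : ℝ => boxAvg T (apExp k lam)) atTop (𝓝 (if lam = 0 then 1 else 0)) := by
  simp only [boxAvg_apExp]
  have h := tendsto_finsetProd (Finset.univ : Finset (Fin k))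
    (fun j _ => tendsto_intervalAvg_exp (lam j))
  convert h using 2
  rw [Finset.prod_ite_zero]
  simp [funext_iff]

theorem span_apExp_eq_adjoin :
    Submodule.span ℂ (Set.range (apExp k)) =
      Subalgebra.toSubmodule (Algebra.adjoin ℂ (Set.range (apExp k))) := by
  rw [Algebra.adjoin_eq_span]
  congr 1
  let M : Submonoid (APB k) :=
    { carrier := Set.range (apExp k)
      one_mem' := ⟨0, apExp_zero⟩
      mul_mem' := by
        rintro _ _ ⟨a, rfl⟩ ⟨b, rfl⟩
        exact ⟨a + b, apExp_add a b⟩ }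
  exact congrArg SetLike.coe (Submonoid.closure_eq M).symm

/-- Trigonometric polynomials. -/
abbrev trigPoly (k : ℕ) : Submodule ℂ (APB k) := Submodule.span ℂ (Set.range (apExp k))

theorem mem_APalg_iff {f : APB k} : f ∈ APalg k ↔ f ∈ closure (trigPoly k : Set (APB k)) := by
  rw [trigPoly, span_apExp_eq_adjoin]
  rfl

theorem exists_trigPoly {f : APB k} (hf : f ∈ APalg k) {ε : ℝ} (hε : 0 < ε) :
    ∃ P ∈ trigPoly k, ‖f - P‖ < ε := by
  obtain ⟨P, hP, h⟩ := Metric.mem_closure_iff.1 (mem_APalg_iff.1 hf) ε hε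
  exact ⟨P, hP, by rwa [dist_eq_norm] at h⟩

theorem apExp_mem (lam : Fin k → ℝ) : apExp k lam ∈ APalg k :=
  mem_APalg_iff.2 (subset_closure (Submodule.subset_span ⟨lam, rfl⟩))

theorem isClosed_APalg : IsClosed (APalg k : Set (APB k)) :=
  Subalgebra.isClosed_topologicalClosure _

theorem star_mem_APalg {f : APB k} (hf : f ∈ APalg k) : star f ∈ APalg k := by
  rw [mem_APalg_iff] at hf ⊢
  refine map_mem_closure continuous_star hf fun P hP => ?_
  induction hP using Submodule.span_induction with
  | mem x hx =>
    obtain ⟨a, rfl⟩ := hx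
    rw [star_apExp]
    exact Submodule.subset_span ⟨_, rfl⟩
  | zero => rw [star_zero]; exact Submodule.zero_mem _
  | add x y _ _ hx hy => rw [star_add]; exact Submodule.add_mem _ hx hy
  | smul c x _ hx => rw [star_smul]; exact Submodule.smul_mem _ _ hx

theorem exists_tendsto_boxAvg {f : APB k} (hf : f ∈ APalg k) :
    ∃ c, Tendsto (fun T : ℝ => boxAvg T f) atTop (𝓝 c) := by
  have hP : ∀ P ∈ trigPoly k, ∃ c, Tendsto (fun T : ℝ => boxAvg T P) atTop (𝓝 c) := by
    intro P hP
    induction hP using Submodule.span_induction with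
    | mem x hx =>
      obtain ⟨a, rfl⟩ := hx
      exact ⟨_, tendsto_boxAvg_apExp a⟩
    | zero =>
      refine ⟨0, ?_⟩
      simp [boxAvg]
    | add x y _ _ hx hy =>
      obtain ⟨c, hc⟩ := hx
      obtain ⟨c', hc'⟩ := hy
      exact ⟨c + c', by simpa only [boxAvg_add] using hc.add hc'⟩
    | smul c x _ hx =>
      obtain ⟨c', hc'⟩ := hx
      exact ⟨c * c', by simpa only [boxAvg_smul] using hc'.const_mul c⟩
  apply cauchySeq_tendsto_of_complete
  rw [Metric.cauchySeq_iff]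
  intro ε hε
  obtain ⟨P, hPm, hfP⟩ := exists_trigPoly hf (ε := ε / 3) (by positivity)
  obtain ⟨c, hc⟩ := hP P hPm
  obtain ⟨N, hN⟩ := Metric.cauchySeq_iff.1 hc.cauchySeq (ε / 3) (by positivity)
  have hd : ∀ T : ℝ, 0 < T → dist (boxAvg T f) (boxAvg T P) < ε / 3 := by
    intro T hT
    have : boxAvg T f - boxAvg T P = boxAvg T (f - P) := by
      have := boxAvg_add T (f - P) P
      rw [sub_add_cancel] at this
      rw [this, add_sub_cancel_right]
    rw [dist_eq_norm, this]
    exact (norm_boxAvg_le hT _).trans_lt hfP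
  refine ⟨max N 1, fun m hm n hn => ?_⟩
  have hm0 : 0 < m := lt_of_lt_of_le zero_lt_one ((le_max_right _ _).trans hm)
  have hn0 : 0 < n := lt_of_lt_of_le zero_lt_one ((le_max_right _ _).trans hn)
  have h1 := hN m ((le_max_left _ _).trans hm) n ((le_max_left _ _).trans hn)
  have h2 := hd m hm0
  have h3 := hd n hn0
  rw [dist_comm] at h3
  have h4 := dist_triangle4 (boxAvg m f) (boxAvg m P) (boxAvg n P) (boxAvg n f)
  linarith

theorem tendsto_boxAvg_bohrCoeff {f : APB k} (hf : f ∈ APalg k) (lam : Fin k → ℝ) :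
    Tendsto (fun T : ℝ => boxAvg T (apExp k (-lam) * f)) atTop (𝓝 (bohrCoeff k f lam)) := by
  rw [bohrCoeff_eq_limUnder]
  exact tendsto_nhds_limUnder (exists_tendsto_boxAvg (mul_mem (apExp_mem _) hf))

theorem bohrCoeff_eq_of_tendsto {f : APB k} {lam : Fin k → ℝ} {c : ℂ}
    (h : Tendsto (fun T : ℝ => boxAvg T (apExp k (-lam) * f)) atTop (𝓝 c)) :
    bohrCoeff k f lam = c := by
  rw [bohrCoeff_eq_limUnder]
  exact h.limUnder_eq

theorem bohrCoeff_add {f g : APB k} (hf : f ∈ APalg k) (hg : g ∈ APalg k) (lam : Fin k → ℝ) :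
    bohrCoeff k ⇑(f + g) lam = bohrCoeff k f lam + bohrCoeff k g lam := by
  apply bohrCoeff_eq_of_tendsto
  simpa only [mul_add, boxAvg_add] using
    (tendsto_boxAvg_bohrCoeff hf lam).add (tendsto_boxAvg_bohrCoeff hg lam)

theorem bohrCoeff_smul {f : APB k} (hf : f ∈ APalg k) (c : ℂ) (lam : Fin k → ℝ) :
    bohrCoeff k ⇑(c • f) lam = c * bohrCoeff k f lam := by
  apply bohrCoeff_eq_of_tendsto
  simpa only [mul_smul_comm, boxAvg_smul] using (tendsto_boxAvg_bohrCoeff hf lam).const_mul c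

theorem norm_bohrCoeff_le {f : APB k} (hf : f ∈ APalg k) (lam : Fin k → ℝ) :
    ‖bohrCoeff k f lam‖ ≤ ‖f‖ := by
  refine le_of_tendsto (tendsto_boxAvg_bohrCoeff hf lam).norm ?_
  filter_upwards [eventually_gt_atTop 0] with T hT
  refine (norm_boxAvg_le hT _).trans ((norm_mul_le _ _).trans ?_)
  exact mul_le_of_le_one_left (norm_nonneg _) (norm_apExp_le _)

theorem bohrCoeff_apExp_mul (f : APB k) (mu lam : Fin k → ℝ) :
    bohrCoeff k ⇑(apExp k mu * f) lam = bohrCoeff k f (lam - mu) := by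
  rw [bohrCoeff_eq_limUnder, bohrCoeff_eq_limUnder]
  congr 1
  ext T
  rw [← mul_assoc, ← apExp_add]
  congr 3
  abel

theorem bohrCoeff_apExp (mu lam : Fin k → ℝ) :
    bohrCoeff k ⇑(apExp k mu) lam = if mu = lam then 1 else 0 := by
  apply bohrCoeff_eq_of_tendsto
  rw [← apExp_add]
  convert tendsto_boxAvg_apExp (-lam + mu) using 3
  rw [neg_add_eq_zero, eq_comm]

/-- The Bohr-Fourier coefficient as a continuous linear functional on `AP^k`. -/
def bohrCLM (lam : Fin k → ℝ) : ↥(APalg k) →L[ℂ] ℂ :=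
  LinearMap.mkContinuous
    { toFun := fun f => bohrCoeff k ⇑(f : APB k) lam
      map_add' := fun f g => bohrCoeff_add f.2 g.2 lam
      map_smul' := fun c f => bohrCoeff_smul f.2 c lam } 1
    (fun f => by rw [one_mul]; exact norm_bohrCoeff_le f.2 lam)

theorem mem_APalg_of_hasSum {J : Type*} {f : J → APB k} {F : APB k} (h : HasSum f F)
    (hf : ∀ j, f j ∈ APalg k) : F ∈ APalg k :=
  isClosed_APalg.mem_of_tendsto h (Eventually.of_forall fun _ => sum_mem fun j _ => hf j)

theorem hasSum_bohrCoeff {J : Type*} {f : J → APB k} {F : APB k} (h : HasSum f F)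
    (hf : ∀ j, f j ∈ APalg k) (lam : Fin k → ℝ) :
    HasSum (fun j => bohrCoeff k (f j) lam) (bohrCoeff k F lam) := by
  have hF := mem_APalg_of_hasSum h hf
  have h1 : HasSum (fun j => (⟨f j, hf j⟩ : APalg k)) ⟨F, hF⟩ := by
    rw [HasSum, Topology.IsInducing.subtypeVal.tendsto_nhds_iff]
    refine Tendsto.congr (fun s => ?_) h
    simp
  exact h1.mapL (bohrCLM lam)

end ToeplitzCorona

namespace ToeplitzCorona

open scoped Topology

variable {k : ℕ}

/-- The translate `x ↦ f (x + a)`. -/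
def translate (a : Fin k → ℝ) (f : APB k) : APB k :=
  f.compContinuous ⟨fun x => x + a, by fun_prop⟩

theorem translate_apply (a x : Fin k → ℝ) (f : APB k) : translate a f x = f (x + a) := rfl

theorem translate_apExp (a lam : Fin k → ℝ) :
    translate a (apExp k lam) = apExp k lam a • apExp k lam := by
  ext x
  rw [translate_apply, apExp_add_arg]
  rfl

theorem norm_translate_le (a : Fin k → ℝ) (f : APB k) : ‖translate a f‖ ≤ ‖f‖ :=
  (BoundedContinuousFunction.norm_le (norm_nonneg _)).2 fun _ => f.norm_coe_le_norm _

theorem tendsto_boxAvg_translate {f : APB k} (hf : f ∈ APalg k) (a : Fin k → ℝ) {c : ℂ}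
    (hc : Tendsto (fun T : ℝ => boxAvg T f) atTop (𝓝 c)) :
    Tendsto (fun T : ℝ => boxAvg T (translate a f)) atTop (𝓝 c) := by
  have hP : ∀ P ∈ trigPoly k,
      Tendsto (fun T : ℝ => boxAvg T (translate a P) - boxAvg T P) atTop (𝓝 0) := by
    intro P hP
    induction hP using Submodule.span_induction with
    | mem x hx =>
      obtain ⟨lam, rfl⟩ := hx
      simp only [translate_apExp, boxAvg_smul]
      by_cases hl : lam = 0
      · subst hl
        simp [apExp_zero]
      · have h := tendsto_boxAvg_apExp lam
        rw [if_neg hl] at h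
        simpa using (h.const_mul (apExp k lam a)).sub h
    | zero =>
      have : translate a (0 : APB k) = 0 := rfl
      simp [this]
    | add x y _ _ hx hy =>
      have h : translate a (x + y) = translate a x + translate a y := rfl
      have := hx.add hy
      rw [add_zero] at this
      refine this.congr fun T => ?_
      rw [h, boxAvg_add, boxAvg_add]
      ring
    | smul c x _ hx =>
      have h : translate a (c • x) = c • translate a x := rfl
      have := hx.const_mul c
      rw [mul_zero] at this
      refine this.congr fun T => ?_
      rw [h, boxAvg_smul, boxAvg_smul]
      ring
  have hsub : ∀ (T : ℝ) (f g : APB k), boxAvg T (f - g) = boxAvg T f - boxAvg T g := by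
    intro T f g
    have := boxAvg_add T (f - g) g
    rw [sub_add_cancel] at this
    rw [this, add_sub_cancel_right]
  have h0 : Tendsto (fun T : ℝ => boxAvg T (translate a f) - boxAvg T f) atTop (𝓝 0) := by
    rw [Metric.tendsto_nhds]
    intro ε hε
    obtain ⟨P, hPm, hfP⟩ := exists_trigPoly hf (ε := ε / 3) (by positivity)
    filter_upwards [Metric.tendsto_nhds.1 (hP P hPm) (ε / 3) (by positivity),
      eventually_gt_atTop 0] with T h1 hT
    rw [dist_zero_right] at h1 ⊢
    have h2 : boxAvg T (translate a f) - boxAvg T f = boxAvg T (translate a (f - P)) +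
        (boxAvg T (translate a P) - boxAvg T P) - boxAvg T (f - P) := by
      have : translate a (f - P) = translate a f - translate a P := rfl
      rw [this, hsub, hsub]
      ring
    rw [h2]
    have h3 := norm_boxAvg_le hT (f - P)
    have h4 := (norm_boxAvg_le hT (translate a (f - P))).trans (norm_translate_le a _)
    have h5 := norm_sub_le (boxAvg T (translate a (f - P)) +
        (boxAvg T (translate a P) - boxAvg T P)) (boxAvg T (f - P))
    have h6 := norm_add_le (boxAvg T (translate a (f - P)))
        (boxAvg T (translate a P) - boxAvg T P)
    linarith
  simpa using h0.add hc

/-- Translates of an almost periodic function form a totally bounded family. -/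
theorem exists_finite_translates {f : APB k} (hf : f ∈ APalg k) {ε : ℝ} (hε : 0 < ε) :
    ∃ t : Finset (Fin k → ℝ), ∀ y, ∃ a ∈ t, ‖translate y f - translate a f‖ < ε := by
  have hP : ∀ P ∈ trigPoly k, ∃ K : Set (APB k), IsCompact K ∧ ∀ y, translate y P ∈ K := by
    intro P hP
    induction hP using Submodule.span_induction with
    | mem x hx =>
      obtain ⟨lam, rfl⟩ := hx
      refine ⟨(fun c : ℂ => c • apExp k lam) '' Metric.closedBall 0 1,
        (isCompact_closedBall _ _).image (by fun_prop), fun y => ⟨apExp k lam y, ?_, ?_⟩⟩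
      · rw [mem_closedBall_zero_iff]
        exact ((apExp k lam).norm_coe_le_norm y).trans (norm_apExp_le lam)
      · rw [translate_apExp]
    | zero => exact ⟨{0}, isCompact_singleton, fun y => rfl⟩
    | add x y _ _ hx hy =>
      obtain ⟨K, hK, hxK⟩ := hx
      obtain ⟨K', hK', hyK⟩ := hy
      refine ⟨(fun q : APB k × APB k => q.1 + q.2) '' (K ×ˢ K'),
        (hK.prod hK').image (by fun_prop), fun s => ⟨(translate s x, translate s y), ⟨hxK s, hyK s⟩, rfl⟩⟩
    | smul c x _ hx =>
      obtain ⟨K, hK, hxK⟩ := hx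
      exact ⟨(fun q : APB k => c • q) '' K, hK.image (by fun_prop),
        fun s => ⟨translate s x, hxK s, rfl⟩⟩
  obtain ⟨P, hPm, hfP⟩ := exists_trigPoly hf (ε := ε / 3) (by positivity)
  obtain ⟨K, hK, hPK⟩ := hP P hPm
  have htb : TotallyBounded (Set.range fun y => translate y P) :=
    hK.totallyBounded.subset (by rintro _ ⟨y, rfl⟩; exact hPK y)
  obtain ⟨t, htr, htf, hcov⟩ := Metric.finite_approx_of_totallyBounded htb (ε / 3) (by positivity)
  have htr' : ∀ q, ∃ y, q ∈ t → translate y P = q := fun q => by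
    by_cases hq : q ∈ t
    · obtain ⟨y, hy⟩ := htr hq
      exact ⟨y, fun _ => hy⟩
    · exact ⟨0, fun h => absurd h hq⟩
  choose g hg using htr'
  classical
  refine ⟨htf.toFinset.image g, fun y => ?_⟩
  obtain ⟨q, hq, hyq⟩ := Set.mem_iUnion₂.1 (hcov ⟨y, rfl⟩)
  refine ⟨g q, Finset.mem_image_of_mem _ (htf.mem_toFinset.2 hq), ?_⟩
  have hgq : translate (g q) P = q := hg q hq
  rw [Metric.mem_ball, dist_eq_norm, ← hgq] at hyq
  have h2 : translate y f - translate (g q) f = translate y (f - P) +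
      (translate y P - translate (g q) P) - translate (g q) (f - P) := by
    have h1 : ∀ s, translate s (f - P) = translate s f - translate s P := fun _ => rfl
    rw [h1, h1]
    abel
  rw [h2]
  have h3 := norm_translate_le y (f - P)
  have h4 := norm_translate_le (g q) (f - P)
  have h5 := norm_sub_le (translate y (f - P) + (translate y P - translate (g q) P))
    (translate (g q) (f - P))
  have h6 := norm_add_le (translate y (f - P)) (translate y P - translate (g q) P)
  linarith

/-- Uniqueness theorem: an almost periodic function with no Bohr-Fourier coefficients vanishes. -/
theorem eq_zero_of_bohrCoeff {f : APB k} (hf : f ∈ APalg k) (h0 : ∀ lam, bohrCoeff k f lam = 0) :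
    f = 0 := by
  have hmeanP : ∀ P ∈ trigPoly k, Tendsto (fun T : ℝ => boxAvg T (P * f)) atTop (𝓝 0) := by
    intro P hP
    induction hP using Submodule.span_induction with
    | mem x hx =>
      obtain ⟨lam, rfl⟩ := hx
      have := tendsto_boxAvg_bohrCoeff hf (-lam)
      rwa [h0, neg_neg] at this
    | zero => simp [boxAvg]
    | add x y _ _ hx hy => simpa [add_mul, boxAvg_add] using hx.add hy
    | smul c x _ hx => simpa [smul_mul_assoc, boxAvg_smul] using hx.const_mul c
  set g : APB k := star f * f with hg
  have hgm : g ∈ APalg k := mul_mem (star_mem_APalg hf) hf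
  have hmean : Tendsto (fun T : ℝ => boxAvg T g) atTop (𝓝 0) := by
    rw [Metric.tendsto_nhds]
    intro ε hε
    obtain ⟨P, hPm, hfP⟩ := exists_trigPoly (star_mem_APalg hf) (ε := ε / (2 * (‖f‖ + 1)))
      (by positivity)
    filter_upwards [Metric.tendsto_nhds.1 (hmeanP P hPm) (ε / 2) (by positivity),
      eventually_gt_atTop 0] with T h1 hT
    rw [dist_zero_right] at h1 ⊢
    have h2 : g = (star f - P) * f + P * f := by rw [hg, sub_mul, sub_add_cancel]
    rw [h2, boxAvg_add]
    have h3 : ‖boxAvg T ((star f - P) * f)‖ ≤ ε / 2 := by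
      calc ‖boxAvg T ((star f - P) * f)‖ ≤ ‖star f - P‖ * ‖f‖ :=
            (norm_boxAvg_le hT _).trans (norm_mul_le _ _)
        _ ≤ ε / (2 * (‖f‖ + 1)) * (‖f‖ + 1) := by gcongr; linarith
        _ = ε / 2 := by field_simp
    linarith [norm_add_le (boxAvg T ((star f - P) * f)) (boxAvg T (P * f))]
  ext x₀
  by_contra hx
  change ¬ f x₀ = 0 at hx
  have hc : 0 < ‖f x₀‖ := norm_pos_iff.2 hx
  obtain ⟨t, ht⟩ := exists_finite_translates hf (half_pos hc)
  have htr : Tendsto (fun T : ℝ => ∑ a ∈ t, boxAvg T (translate (x₀ - a) g)) atTop (𝓝 0) := by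
    have := tendsto_finsetSum t fun a _ => tendsto_boxAvg_translate hgm (x₀ - a) hmean
    simpa using this
  have hsum : ∀ T : ℝ, ∑ a ∈ t, boxAvg T (translate (x₀ - a) g) =
      boxAvg T (∑ a ∈ t, translate (x₀ - a) g) := by
    intro T
    clear ht htr
    classical
    induction t using Finset.induction_on with
    | empty => simp [boxAvg]
    | insert a s ha ih => rw [Finset.sum_insert ha, Finset.sum_insert ha, boxAvg_add, ih]
  have hgval : ∀ x, (g x).re = ‖f x‖ ^ 2 := by
    intro x
    rw [hg, BoundedContinuousFunction.mul_apply, BoundedContinuousFunction.star_apply]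
    rw [Complex.star_def, Complex.conj_mul']
    norm_cast
  have hlow : ∀ y, (‖f x₀‖ / 2) ^ 2 ≤ ((∑ a ∈ t, translate (x₀ - a) g) y).re := by
    intro y
    obtain ⟨a, hat, ha⟩ := ht y
    rw [BoundedContinuousFunction.coe_sum, Finset.sum_apply, Complex.re_sum]
    have h1 : ‖f (y + (x₀ - a)) - f x₀‖ < ‖f x₀‖ / 2 := by
      have := ((translate y f - translate a f).norm_coe_le_norm (x₀ - a)).trans_lt ha
      rw [BoundedContinuousFunction.sub_apply, translate_apply, translate_apply, sub_add_cancel] at this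
      rwa [add_comm y]
    have h2 : ‖f x₀‖ / 2 ≤ ‖f (y + (x₀ - a))‖ := by
      have := norm_sub_norm_le (f x₀) (f (y + (x₀ - a)))
      rw [norm_sub_rev] at this
      linarith
    calc (‖f x₀‖ / 2) ^ 2 ≤ ‖f (y + (x₀ - a))‖ ^ 2 := by gcongr
      _ = (translate (x₀ - a) g y).re := by rw [translate_apply, hgval]
      _ ≤ _ := Finset.single_le_sum (f := fun a => (translate (x₀ - a) g y).re)
          (fun b _ => by rw [translate_apply, hgval]; positivity) hat
  have hre := (Complex.continuous_re.tendsto 0).comp htr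
  have : (‖f x₀‖ / 2) ^ 2 ≤ (0 : ℂ).re := by
    refine ge_of_tendsto hre ?_
    filter_upwards [eventually_gt_atTop 0] with T hT
    rw [Function.comp_apply, hsum]
    exact le_re_boxAvg hT _ hlow
  rw [Complex.zero_re] at this
  have : 0 < (‖f x₀‖ / 2) ^ 2 := by positivity
  linarith

theorem eq_of_bohrCoeff {f g : APB k} (hf : f ∈ APalg k) (hg : g ∈ APalg k)
    (h : ∀ lam, bohrCoeff k f lam = bohrCoeff k g lam) : f = g := by
  rw [← sub_eq_zero]
  refine eq_zero_of_bohrCoeff (sub_mem hf hg) fun lam => ?_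
  have h1 : f - g = f + (-1 : ℂ) • g := by rw [neg_one_smul, sub_eq_add_neg]
  rw [h1, bohrCoeff_add hf ((APalg k).smul_mem hg _), bohrCoeff_smul hg, h]
  ring

end ToeplitzCorona

namespace ToeplitzCorona

open scoped Topology

variable {k : ℕ}

/-- The almost periodic function with a prescribed absolutely convergent Bohr-Fourier series. -/
def synth (c : (Fin k → ℝ) → ℂ) : APB k := ∑' lam, c lam • apExp k lam

theorem hasSum_synth {c : (Fin k → ℝ) → ℂ} (hc : Summable fun lam => ‖c lam‖) :
    HasSum (fun lam => c lam • apExp k lam) (synth c) := by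
  refine (Summable.of_norm_bounded hc fun lam => ?_).hasSum
  rw [norm_smul]
  exact mul_le_of_le_one_right (norm_nonneg _) (norm_apExp_le lam)

theorem synth_mem {c : (Fin k → ℝ) → ℂ} (hc : Summable fun lam => ‖c lam‖) :
    synth c ∈ APalg k :=
  mem_APalg_of_hasSum (hasSum_synth hc) fun lam => (APalg k).smul_mem (apExp_mem lam) _

theorem bohrCoeff_synth {c : (Fin k → ℝ) → ℂ} (hc : Summable fun lam => ‖c lam‖)
    (lam : Fin k → ℝ) : bohrCoeff k (synth c) lam = c lam := by
  have h := hasSum_bohrCoeff (hasSum_synth hc)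
    (fun lam => (APalg k).smul_mem (apExp_mem lam) _) lam
  refine h.unique ?_
  convert hasSum_ite_eq lam (c lam) using 2 with mu
  rw [bohrCoeff_smul (apExp_mem mu), bohrCoeff_apExp]
  split_ifs with h1
  · rw [h1, mul_one]
  · rw [mul_zero]

theorem synth_bohrCoeff {f : APB k} (hf : f ∈ APalg k)
    (hs : Summable fun lam => ‖bohrCoeff k f lam‖) : synth (bohrCoeff k f) = f :=
  eq_of_bohrCoeff (synth_mem hs) hf fun lam => bohrCoeff_synth hs lam

theorem APWmem_synth {Δ : Set (Fin k → ℝ)} {c : (Fin k → ℝ) → ℂ}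
    (hc : Summable fun lam => ‖c lam‖) (hΔ : ∀ lam, c lam ≠ 0 → lam ∈ Δ) :
    APWmem k Δ (synth c) := by
  refine ⟨⟨synth_mem hc, fun lam hlam => hΔ lam ?_⟩, ?_⟩
  · rwa [bohrSpectrum, Set.mem_ofPred_eq, bohrCoeff_synth hc] at hlam
  · simpa only [bohrCoeff_synth hc] using hc

theorem hasSum_bohrCoeff_mul {f g : APB k} (hf : f ∈ APalg k)
    (hs : Summable fun lam => ‖bohrCoeff k f lam‖) (hg : g ∈ APalg k) (lam : Fin k → ℝ) :
    HasSum (fun mu => bohrCoeff k f mu * bohrCoeff k g (lam - mu)) (bohrCoeff k ⇑(f * g) lam) := by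
  have h1 := hasSum_synth hs
  rw [synth_bohrCoeff hf hs] at h1
  have h2 := hasSum_bohrCoeff (h1.mul_right g)
    (fun mu => mul_mem ((APalg k).smul_mem (apExp_mem mu) _) hg) lam
  refine h2.congr_fun ?_
  intro mu
  rw [smul_mul_assoc, bohrCoeff_smul (mul_mem (apExp_mem mu) hg), bohrCoeff_apExp_mul]

theorem APWmem_mul {Δ : Set (Fin k → ℝ)} (hΔ : ∀ x ∈ Δ, ∀ y ∈ Δ, x + y ∈ Δ) {f g : APB k}
    (hf : APWmem k Δ f) (hg : APWmem k Δ g) : APWmem k Δ (f * g) := by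
  have hsum := hasSum_bohrCoeff_mul hf.1.1 hf.2 hg.1.1
  refine ⟨⟨mul_mem hf.1.1 hg.1.1, fun lam hlam => ?_⟩, ?_⟩
  · by_contra hn
    refine hlam ((hsum lam).unique ?_)
    convert hasSum_zero with mu
    by_contra h
    have h1 := hf.1.2 (left_ne_zero_of_mul h)
    have h2 := hg.1.2 (right_ne_zero_of_mul h)
    refine hn ?_
    simpa using hΔ _ h1 _ h2
  · have h1 := hf.2.mul_of_nonneg hg.2 (fun _ => norm_nonneg _) (fun _ => norm_nonneg _)
    let e : (Fin k → ℝ) × (Fin k → ℝ) ≃ (Fin k → ℝ) × (Fin k → ℝ) :=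
      { toFun := fun q => (q.2, q.1 - q.2)
        invFun := fun q => (q.1 + q.2, q.1)
        left_inv := fun q => by simp
        right_inv := fun q => by simp }
    have h2 := (e.summable_iff.2 h1)
    refine Summable.of_nonneg_of_le (fun _ => norm_nonneg _) (fun lam => ?_) h2.prod
    rw [← (hsum lam).tsum_eq]
    refine (norm_tsum_le_tsum_norm ?_).trans_eq ?_
    · refine (h2.prod_factor lam).congr fun mu => ?_
      simp [e]
    · refine tsum_congr fun mu => ?_
      simp [e]

theorem APWmem_zero (Δ : Set (Fin k → ℝ)) : APWmem k Δ 0 := by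
  have h : ∀ lam, bohrCoeff k (0 : APB k) lam = 0 := fun lam => by
    have := bohrCoeff_smul (zero_mem (APalg k)) 0 lam
    rwa [zero_smul, zero_mul] at this
  refine ⟨⟨zero_mem _, fun lam hlam => absurd (h lam) hlam⟩, ?_⟩
  simp only [h, norm_zero]
  exact summable_zero

theorem APWmem_add {Δ : Set (Fin k → ℝ)} {f g : APB k}
    (hf : APWmem k Δ f) (hg : APWmem k Δ g) : APWmem k Δ (f + g) := by
  refine ⟨⟨add_mem hf.1.1 hg.1.1, fun lam hlam => ?_⟩, ?_⟩
  · rw [bohrSpectrum, Set.mem_ofPred_eq, bohrCoeff_add hf.1.1 hg.1.1] at hlam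
    by_contra hn
    refine hlam ?_
    rw [not_not.1 fun h => hn (hf.1.2 h), not_not.1 fun h => hn (hg.1.2 h), add_zero]
  · refine Summable.of_nonneg_of_le (fun _ => norm_nonneg _) (fun lam => ?_) (hf.2.add hg.2)
    rw [bohrCoeff_add hf.1.1 hg.1.1]
    exact norm_add_le _ _

theorem APWmem_sum {Δ : Set (Fin k → ℝ)} {ι : Type*} (s : Finset ι) {f : ι → APB k}
    (hf : ∀ i ∈ s, APWmem k Δ (f i)) : APWmem k Δ (∑ i ∈ s, f i) := by
  classical
  induction s using Finset.induction_on with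
  | empty => exact APWmem_zero Δ
  | insert a s ha ih =>
    rw [Finset.sum_insert ha]
    exact APWmem_add (hf a (Finset.mem_insert_self _ _))
      (ih fun i hi => hf i (Finset.mem_insert_of_mem hi))

theorem bohrCoeff_sum {ι : Type*} (s : Finset ι) {f : ι → APB k}
    (hf : ∀ i, f i ∈ APalg k) (lam : Fin k → ℝ) :
    bohrCoeff k ⇑(∑ i ∈ s, f i) lam = ∑ i ∈ s, bohrCoeff k (f i) lam := by
  classical
  induction s using Finset.induction_on with
  | empty =>
    have := bohrCoeff_smul (zero_mem (APalg k)) 0 lam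
    rwa [zero_smul, zero_mul] at this
  | insert a s ha ih =>
    rw [Finset.sum_insert ha, Finset.sum_insert ha,
      bohrCoeff_add (hf a) (sum_mem fun i _ => hf i), ih]

theorem boxAvg_star (T : ℝ) (f : APB k) : boxAvg T (star f) = star (boxAvg T f) := by
  unfold boxAvg
  rw [star_mul', Complex.star_def, ← integral_conj, ← Complex.ofReal_inv, Complex.conj_ofReal]
  rfl

theorem bohrCoeff_star {f : APB k} (hf : f ∈ APalg k) (lam : Fin k → ℝ) :
    bohrCoeff k ⇑(star f) lam = star (bohrCoeff k f (-lam)) := by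
  apply bohrCoeff_eq_of_tendsto
  have h := (continuous_star.tendsto _).comp (tendsto_boxAvg_bohrCoeff hf (-lam))
  refine h.congr fun T => ?_
  rw [Function.comp_apply, ← boxAvg_star, star_mul', star_apExp, neg_neg]

theorem hasSum_bohrCoeff_star_mul {f g : APB k} (hf : f ∈ APalg k)
    (hs : Summable fun lam => ‖bohrCoeff k f lam‖) (hg : g ∈ APalg k) (lam : Fin k → ℝ) :
    HasSum (fun mu => star (bohrCoeff k f mu) * bohrCoeff k g (lam + mu))
      (bohrCoeff k ⇑(star f * g) lam) := by
  have h := hasSum_bohrCoeff_mul (f := star f) (star_mem_APalg hf)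
    (by
      refine ((Equiv.neg _).summable_iff.2 hs).congr fun mu => ?_
      rw [bohrCoeff_star hf, norm_star]
      rfl) hg lam
  rw [← (Equiv.neg _).hasSum_iff] at h
  refine h.congr_fun fun mu => ?_
  rw [Function.comp_apply, Equiv.neg_apply, bohrCoeff_star hf, neg_neg, sub_neg_eq_add]

end ToeplitzCorona

namespace ToeplitzCorona

open scoped Topology

/-- The Hilbert space of square-summable families indexed by `I`. -/
abbrev L2 (I : Type) : Type := lp (fun _ : I => ℂ) 2

section WeightedPullback

variable {I I' I'' : Type}

/-- Data for a weighted pullback `x ↦ (i ↦ w i * x (s i))` which is a contraction on `ℓ²`. -/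
structure Weight (I I' : Type) where
  w : I' → ℂ
  s : I' → I
  norm_le : ∀ i, ‖w i‖ ≤ 1
  inj : ∀ i j, w i ≠ 0 → w j ≠ 0 → s i = s j → i = j

theorem sum_norm_sq_le (x : L2 I) (s : Finset I) : ∑ i ∈ s, ‖x i‖ ^ 2 ≤ ‖x‖ ^ 2 := by
  have := lp.sum_rpow_le_norm_rpow (p := 2) (by norm_num) x s
  simpa using this

theorem Weight.sum_le (W : Weight I I') (x : L2 I) (s : Finset I') :
    ∑ i ∈ s, ‖W.w i * x (W.s i)‖ ^ 2 ≤ ‖x‖ ^ 2 := by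
  classical
  calc ∑ i ∈ s, ‖W.w i * x (W.s i)‖ ^ 2
      = ∑ i ∈ s with W.w i ≠ 0, ‖W.w i * x (W.s i)‖ ^ 2 := by
        rw [Finset.sum_filter_of_ne]
        intro i _ h h0
        simp [h0] at h
    _ ≤ ∑ i ∈ s with W.w i ≠ 0, ‖x (W.s i)‖ ^ 2 := by
        gcongr with i
        rw [norm_mul]
        exact mul_le_of_le_one_left (norm_nonneg _) (W.norm_le i)
    _ = ∑ i ∈ (s.filter fun i => W.w i ≠ 0).image W.s, ‖x i‖ ^ 2 := by
        rw [Finset.sum_image]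
        intro i hi j hj h
        simp only [Finset.coe_filter, Set.mem_ofPred_eq] at hi hj
        exact W.inj i j hi.2 hj.2 h
    _ ≤ ‖x‖ ^ 2 := sum_norm_sq_le x _

/-- The weighted pullback operator. -/
def wpull (W : Weight I I') : L2 I →L[ℂ] L2 I' :=
  LinearMap.mkContinuous
    { toFun := fun x => ⟨fun i => W.w i * x (W.s i),
        memℓp_gen' (C := ‖x‖ ^ 2) fun s => by simpa using W.sum_le x s⟩
      map_add' := fun x y => by
        ext i
        exact mul_add _ _ _
      map_smul' := fun c x => by
        ext i
        exact mul_left_comm _ _ _ } 1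
    (fun x => by
      rw [one_mul]
      refine lp.norm_le_of_forall_sum_le (by norm_num) (norm_nonneg _) fun s => ?_
      simpa using W.sum_le x s)

@[simp] theorem wpull_apply (W : Weight I I') (x : L2 I) (i : I') :
    wpull W x i = W.w i * x (W.s i) := rfl

theorem norm_wpull_le (W : Weight I I') : ‖wpull W‖ ≤ 1 :=
  LinearMap.mkContinuous_norm_le _ zero_le_one _

/-- The diagonal weight given by a function into the closed unit disc. -/
def diagWeight (φ : I → ℂ) (h : ∀ i, ‖φ i‖ ≤ 1) : Weight I I :=
  ⟨φ, id, h, fun _ _ _ _ h => h⟩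

/-- The diagonal operator with entries `φ`. -/
def diag (φ : I → ℂ) (h : ∀ i, ‖φ i‖ ≤ 1) : L2 I →L[ℂ] L2 I := wpull (diagWeight φ h)

@[simp] theorem diag_apply (φ : I → ℂ) (h : ∀ i, ‖φ i‖ ≤ 1) (x : L2 I) (i : I) :
    diag φ h x i = φ i * x i := rfl

end WeightedPullback

section Graded

variable {Γ : Type} [AddCommGroup Γ] {I I' I'' : Type}

/-- `b` raises degrees by `d`, where `g` and `g'` are the degrees of the basis vectors. -/
def IsGr (g : I → Γ) (g' : I' → Γ) (d : Γ) (b : L2 I →L[ℂ] L2 I') : Prop :=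
  ∀ (φ : Γ → ℂ) (h : ∀ x, ‖φ x‖ ≤ 1) (x : L2 I) (i : I'),
    b (diag (fun i => φ (g i)) (fun i => h (g i)) x) i = φ (g' i - d) * b x i

theorem isGr_wpull {g : I → Γ} {g' : I' → Γ} {d : Γ} (W : Weight I I')
    (hW : ∀ i, W.w i ≠ 0 → g' i = g (W.s i) + d) : IsGr g g' d (wpull W) := by
  intro φ h x i
  by_cases h0 : W.w i = 0
  · simp [h0]
  · simp [hW i h0, mul_left_comm]

theorem IsGr.smul {g : I → Γ} {g' : I' → Γ} {d : Γ} {b : L2 I →L[ℂ] L2 I'}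
    (hb : IsGr g g' d b) (c : ℂ) : IsGr g g' d (c • b) := by
  intro φ h x i
  simp [hb φ h x i, mul_left_comm]

theorem IsGr.comp {g : I → Γ} {g' : I' → Γ} {g'' : I'' → Γ} {d d' : Γ} {b : L2 I →L[ℂ] L2 I'}
    {b' : L2 I' →L[ℂ] L2 I''} (hb' : IsGr g' g'' d' b') (hb : IsGr g g' d b) :
    IsGr g g'' (d + d') (b'.comp b) := by
  intro φ h x i
  have h1 : b (diag (fun i => φ (g i)) (fun i => h (g i)) x) =
      diag (fun i => φ (g' i - d)) (fun i => h (g' i - d)) (b x) := by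
    ext j
    exact hb φ h x j
  have h2 := hb' (fun y => φ (y - d)) (fun y => h _) (b x) i
  rw [ContinuousLinearMap.comp_apply, h1, ContinuousLinearMap.comp_apply, h2, sub_sub, add_comm d]

/-- `T` is an absolutely convergent sum of operators homogeneous for the given degrees. -/
def WG (g : I → Γ) (g' : I' → Γ) (T : L2 I →L[ℂ] L2 I') : Prop :=
  ∃ (J : Type) (b : J → L2 I →L[ℂ] L2 I') (d : J → Γ), Summable (fun j => ‖b j‖) ∧ HasSum b T ∧
    ∀ j, IsGr g g' (d j) (b j)

theorem WG.smul {g : I → Γ} {g' : I' → Γ} {T : L2 I →L[ℂ] L2 I'} (hT : WG g g' T) (c : ℂ) :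
    WG g g' (c • T) := by
  obtain ⟨J, b, d, hs, hT, hd⟩ := hT
  refine ⟨J, fun j => c • b j, d, ?_, hT.const_smul c, fun j => (hd j).smul c⟩
  simpa only [norm_smul] using hs.mul_left ‖c‖

theorem WG.add {g : I → Γ} {g' : I' → Γ} {T T' : L2 I →L[ℂ] L2 I'} (hT : WG g g' T)
    (hT' : WG g g' T') : WG g g' (T + T') := by
  obtain ⟨J, b, d, hs, hT, hd⟩ := hT
  obtain ⟨J', b', d', hs', hT', hd'⟩ := hT'
  refine ⟨J ⊕ J', Sum.elim b b', Sum.elim d d', ?_, HasSum.sum (by simpa using hT) (by simpa using hT'), ?_⟩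
  · exact (HasSum.sum (f := fun j => ‖Sum.elim b b' j‖) hs.hasSum hs'.hasSum).summable
  · rintro (j | j)
    · exact hd j
    · exact hd' j

theorem WG.comp {g : I → Γ} {g' : I' → Γ} {g'' : I'' → Γ} {T : L2 I →L[ℂ] L2 I'}
    {T' : L2 I' →L[ℂ] L2 I''} (hT' : WG g' g'' T') (hT : WG g g' T) :
    WG g g'' (T'.comp T) := by
  obtain ⟨J, b, d, hs, hT, hd⟩ := hT
  obtain ⟨J', b', d', hs', hT', hd'⟩ := hT'
  have h1 := hs'.mul_of_nonneg hs (fun _ => norm_nonneg _) (fun _ => norm_nonneg _)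
  have h2 : Summable fun q : J' × J => ‖(b' q.1).comp (b q.2)‖ :=
    Summable.of_nonneg_of_le (fun _ => norm_nonneg _)
      (fun q => ContinuousLinearMap.opNorm_comp_le _ _) h1
  refine ⟨J' × J, fun q => (b' q.1).comp (b q.2), fun q => d q.2 + d' q.1, h2, ?_,
    fun q => (hd' q.1).comp (hd q.2)⟩
  have h3 : HasSum (fun j' => (b' j').comp T) (T'.comp T) :=
    hT'.mapL ((ContinuousLinearMap.compL ℂ (L2 I) (L2 I') (L2 I'')).flip T)
  have h4 : ∀ j', HasSum (fun j => (b' j').comp (b j)) ((b' j').comp T) := fun j' =>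
    hT.mapL (ContinuousLinearMap.compL ℂ (L2 I) (L2 I') (L2 I'') (b' j'))
  have h5 := h2.of_norm.hasSum
  rwa [(h5.prod_fiberwise h4).unique h3] at h5

end Graded

end ToeplitzCorona

namespace ToeplitzCorona

open scoped Topology

theorem norm_compLeftContinuousBounded_le {Γ H : Type} [TopologicalSpace Γ]
    [NormedAddCommGroup H] [NormedSpace ℂ H] (b : H →L[ℂ] H) :
    ‖b.compLeftContinuousBounded Γ‖ ≤ ‖b‖ := by
  refine ContinuousLinearMap.opNorm_le_bound _ (by positivity) fun f => ?_
  refine (BoundedContinuousFunction.norm_le (by positivity)).2 fun x => ?_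
  exact (b.le_opNorm _).trans (by gcongr; exact f.norm_coe_le_norm x)

section Shifts

variable {Γ : Type} [AddCommGroup Γ] [TopologicalSpace Γ] [DiscreteTopology Γ] {H : Type}
  [NormedAddCommGroup H] [NormedSpace ℂ H]

/-- Translation of bounded functions on a discrete group. -/
def shiftOp (d : Γ) : (Γ →ᵇ H) →L[ℂ] (Γ →ᵇ H) :=
  LinearMap.mkContinuous
    { toFun := fun f => f.compContinuous ⟨fun x => x - d, continuous_of_discreteTopology⟩
      map_add' := fun _ _ => rfl
      map_smul' := fun _ _ => rfl } 1
    (fun f => by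
      rw [one_mul]
      exact (BoundedContinuousFunction.norm_le (norm_nonneg _)).2 fun _ => f.norm_coe_le_norm _)

theorem shiftOp_apply (d x : Γ) (f : Γ →ᵇ H) : shiftOp d f x = f (x - d) := rfl

theorem norm_shiftOp_le (d : Γ) : ‖(shiftOp d : (Γ →ᵇ H) →L[ℂ] (Γ →ᵇ H))‖ ≤ 1 :=
  LinearMap.mkContinuous_norm_le _ zero_le_one _

variable (Γ H) in
/-- The Banach algebra of translation-invariant operators on bounded functions. -/
abbrev TransInv : Subalgebra ℂ ((Γ →ᵇ H) →L[ℂ] (Γ →ᵇ H)) :=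
  Subalgebra.centralizer ℂ (Set.range shiftOp)

theorem mem_transInv {T : (Γ →ᵇ H) →L[ℂ] (Γ →ᵇ H)}
    (h : ∀ d f, shiftOp d (T f) = T (shiftOp d f)) : T ∈ TransInv Γ H := by
  rw [Subalgebra.mem_centralizer_iff]
  rintro _ ⟨d, rfl⟩
  ext1 f
  exact h d f

/-- The translation, as a central element of the algebra of translation-invariant operators. -/
def shiftElt (d : Γ) : TransInv Γ H :=
  ⟨shiftOp d, mem_transInv fun d' f => by
    ext x
    rw [shiftOp_apply, shiftOp_apply, shiftOp_apply, shiftOp_apply, sub_right_comm]⟩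

variable (Γ) in
/-- Pointwise application of an operator to a bounded function. -/
def postOp : (H →L[ℂ] H) →L[ℂ] ((Γ →ᵇ H) →L[ℂ] (Γ →ᵇ H)) :=
  LinearMap.mkContinuous
    { toFun := fun b => b.compLeftContinuousBounded Γ
      map_add' := fun _ _ => rfl
      map_smul' := fun _ _ => rfl } 1
    (fun b => by
      rw [one_mul]
      exact norm_compLeftContinuousBounded_le b)

/-- Pointwise application of an operator, as a translation-invariant operator. -/
def postElt (b : H →L[ℂ] H) : TransInv Γ H := ⟨postOp Γ b, mem_transInv fun _ _ => rfl⟩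

theorem exists_bound_of_twisted_left_inverse_aux [CompleteSpace H] {J : Type}
    (b : J → H →L[ℂ] H) (d : J → Γ)
    (hb : Summable fun j => ‖b j‖)
    (h : ∀ χ : Γ → ℂ, χ 0 = 1 → (∀ x y, χ (x + y) = χ x * χ y) → (∀ x, ‖χ x‖ = 1) →
      ∃ a : H →L[ℂ] H, a.comp (∑' j, χ (d j) • b j) = ContinuousLinearMap.id ℂ H) :
    ∃ C : ℝ, 0 ≤ C ∧ ∀ (f : Γ →ᵇ H) (M : ℝ), 0 ≤ M → (∀ x, ‖∑' j, b j (f (x - d j))‖ ≤ M) →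
      ∀ x, ‖f x‖ ≤ C * M := by
  have hcl : IsClosed (TransInv Γ H : Set ((Γ →ᵇ H) →L[ℂ] (Γ →ᵇ H))) :=
    Set.isClosed_centralizer _
  have : CompleteSpace (TransInv Γ H) := hcl.completeSpace_coe
  have hb' : Summable fun j => ‖(postElt (b j) : TransInv Γ H)‖ :=
    Summable.of_nonneg_of_le (fun j => norm_nonneg (postOp Γ (b j)))
      (fun j => norm_compLeftContinuousBounded_le (b j)) hb
  obtain ⟨a, ha⟩ := exists_left_inverse_of_characters (R := TransInv Γ H) shiftElt
    (by
      apply Subtype.ext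
      ext f x
      change f (x - 0) = f x
      rw [sub_zero])
    (fun c d => by
      apply Subtype.ext
      ext f x
      change f (x - (c + d)) = f (x - c - d)
      rw [sub_sub])
    (fun g a => by
      apply Subtype.ext
      exact (Subalgebra.mem_centralizer_iff ℂ).1 a.2 _ ⟨g, rfl⟩)
    (fun g => norm_shiftOp_le g) (fun j => postElt (b j)) d hb'
    (fun χ h0 hadd hn => by
      obtain ⟨a, ha⟩ := h χ h0 hadd hn
      refine ⟨postElt a, ?_⟩
      have hs : Summable fun j => χ (d j) • b j := by
        refine Summable.of_norm ?_
        simpa only [norm_smul, hn, one_mul] using hb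
      have h1 : HasSum (fun j => χ (d j) • (postElt (b j) : TransInv Γ H))
          (postElt (∑' j, χ (d j) • b j)) := by
        rw [HasSum, Topology.IsInducing.subtypeVal.tendsto_nhds_iff]
        refine Tendsto.congr (fun s => ?_) (hs.hasSum.mapL (postOp Γ))
        rw [Function.comp_apply, AddSubmonoidClass.coe_finsetSum]
        rfl
      rw [h1.tsum_eq]
      apply Subtype.ext
      change postOp Γ (a.comp (∑' j, χ (d j) • b j)) = 1
      rw [ha]
      rfl)
  refine ⟨‖a.1‖, norm_nonneg _, fun f M hM hfM x => ?_⟩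
  have hs : HasSum (fun j => (postOp Γ (b j)).comp (shiftOp (d j)))
      (∑' j, (postOp Γ (b j)).comp (shiftOp (d j))) := by
    refine (Summable.of_norm_bounded hb fun j => ?_).hasSum
    refine (ContinuousLinearMap.opNorm_comp_le _ _).trans ?_
    exact (mul_le_of_le_one_right (norm_nonneg _) (norm_shiftOp_le _)).trans
      (norm_compLeftContinuousBounded_le (b j))
  set X := ∑' j, (postOp Γ (b j)).comp (shiftOp (d j)) with hX
  have hXm : X ∈ TransInv Γ H := hcl.mem_of_tendsto hs (Eventually.of_forall fun s =>
    sum_mem fun j _ => mul_mem (postElt (b j)).2 (shiftElt (d j)).2)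
  have hXs : HasSum (fun j => (postElt (b j) : TransInv Γ H) * shiftElt (d j)) ⟨X, hXm⟩ := by
    rw [HasSum, Topology.IsInducing.subtypeVal.tendsto_nhds_iff]
    refine Tendsto.congr (fun s => ?_) hs
    rw [Function.comp_apply, AddSubmonoidClass.coe_finsetSum]
    rfl
  rw [hXs.tsum_eq] at ha
  have hXf : ∀ y, X f y = ∑' j, b j (f (y - d j)) := by
    intro y
    let ev : ((Γ →ᵇ H) →L[ℂ] (Γ →ᵇ H)) →L[ℂ] H :=
      (BoundedContinuousFunction.evalCLM ℂ y).comp (ContinuousLinearMap.apply ℂ (Γ →ᵇ H) f)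
    exact (hs.mapL ev).tsum_eq.symm
  have h1 : ‖X f‖ ≤ M := (BoundedContinuousFunction.norm_le hM).2 fun y => by
    rw [hXf]
    exact hfM y
  have h2 : a.1 (X f) = f := by
    have := congrArg (fun q : TransInv Γ H => q.1 f) ha
    exact this
  calc ‖f x‖ ≤ ‖f‖ := f.norm_coe_le_norm x
    _ = ‖a.1 (X f)‖ := by rw [h2]
    _ ≤ ‖a.1‖ * ‖X f‖ := a.1.le_opNorm _
    _ ≤ ‖a.1‖ * M := by gcongr

end Shifts

/-- An absolutely convergent operator-valued Fourier series on a discrete group which is left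
invertible at every character is bounded below on bounded functions. -/
theorem exists_bound_of_twisted_left_inverse {Γ : Type} [AddCommGroup Γ] {H : Type}
    [NormedAddCommGroup H] [NormedSpace ℂ H] [CompleteSpace H] {J : Type}
    (b : J → H →L[ℂ] H) (d : J → Γ) (hb : Summable fun j => ‖b j‖)
    (h : ∀ χ : Γ → ℂ, χ 0 = 1 → (∀ x y, χ (x + y) = χ x * χ y) → (∀ x, ‖χ x‖ = 1) →
      ∃ a : H →L[ℂ] H, a.comp (∑' j, χ (d j) • b j) = ContinuousLinearMap.id ℂ H) :
    ∃ C : ℝ, 0 ≤ C ∧ ∀ (f : Γ → H) (K M : ℝ), (∀ x, ‖f x‖ ≤ K) → 0 ≤ M →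
      (∀ x, ‖∑' j, b j (f (x - d j))‖ ≤ M) → ∀ x, ‖f x‖ ≤ C * M := by
  let _ : TopologicalSpace Γ := ⊥
  have : DiscreteTopology Γ := ⟨rfl⟩
  obtain ⟨C, hC, hf⟩ := exists_bound_of_twisted_left_inverse_aux b d hb h
  exact ⟨C, hC, fun f K M hK => hf (BoundedContinuousFunction.ofNormedAddCommGroup f
    continuous_of_discreteTopology K hK) M⟩

end ToeplitzCorona

namespace ToeplitzCorona

open scoped Topology InnerProduct

/-- The indicator of a point, as a function into the unit disc. -/
def pointInd {Γ : Type} (c x : Γ) : ℂ := by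
  classical exact if x = c then 1 else 0

theorem pointInd_self {Γ : Type} (c : Γ) : pointInd c c = 1 := if_pos rfl

theorem pointInd_of_ne {Γ : Type} {c x : Γ} (h : x ≠ c) : pointInd c x = 0 := if_neg h

theorem norm_pointInd_le {Γ : Type} (c x : Γ) : ‖pointInd c x‖ ≤ 1 := by
  by_cases h : x = c
  · rw [h, pointInd_self, norm_one]
  · rw [pointInd_of_ne h, norm_zero]
    exact zero_le_one

section Bounds

variable {Γ : Type} {I I' : Type}

/-- The projection onto the vectors of degree `c`. -/
def proj (g : I → Γ) (c : Γ) : L2 I →L[ℂ] L2 I :=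
  diag (fun i => pointInd c (g i)) (fun _ => norm_pointInd_le _ _)

theorem proj_apply (g : I → Γ) (c : Γ) (x : L2 I) (i : I) :
    proj g c x i = pointInd c (g i) * x i := rfl

theorem norm_coord_le (x : L2 I) (i : I) : ‖x i‖ ≤ ‖x‖ := lp.norm_apply_le_norm (by norm_num) x i

/-- All degrees have at most `n` basis vectors. -/
def FiberLE (g : I → Γ) (n : ℕ) : Prop :=
  ∀ (c : Γ) (s : Finset I), (∀ i ∈ s, g i = c) → s.card ≤ n

theorem FiberLE.norm_proj_le {g : I → Γ} {n : ℕ} (hg : FiberLE g n) (c : Γ) {x : L2 I} {M : ℝ}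
    (hM : 0 ≤ M) (hx : ∀ i, ‖x i‖ ≤ M) : ‖proj g c x‖ ≤ n * M := by
  classical
  refine lp.norm_le_of_forall_sum_le (by norm_num) (by positivity) fun s => ?_
  simp only [ENNReal.toReal_ofNat, Real.rpow_ofNat]
  calc ∑ i ∈ s, ‖proj g c x i‖ ^ 2 = ∑ i ∈ s with g i = c, ‖proj g c x i‖ ^ 2 := by
        rw [Finset.sum_filter_of_ne]
        intro i _ h
        by_contra h0
        rw [proj_apply, pointInd_of_ne h0] at h
        simp at h
    _ ≤ ∑ i ∈ s with g i = c, M ^ 2 := by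
        gcongr with i
        rw [proj_apply, norm_mul]
        exact (mul_le_of_le_one_left (norm_nonneg _) (norm_pointInd_le _ _)).trans (hx i)
    _ = (s.filter fun i => g i = c).card * M ^ 2 := by rw [Finset.sum_const, nsmul_eq_mul]
    _ ≤ n * M ^ 2 := by
        gcongr
        exact hg c _ fun i hi => (Finset.mem_filter.1 hi).2
    _ ≤ (n * M) ^ 2 := by
        rw [mul_pow]
        gcongr
        exact_mod_cast Nat.le_self_pow two_ne_zero n

/-- `T` maps absolutely summable families to absolutely summable families, with a bound. -/
def L1Bdd (T : L2 I →L[ℂ] L2 I') : Prop :=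
  ∃ C : ℝ, 0 ≤ C ∧ ∀ x : L2 I, Summable (fun i => ‖x i‖) →
    Summable (fun i => ‖T x i‖) ∧ ∑' i, ‖T x i‖ ≤ C * ∑' i, ‖x i‖

theorem l1Bdd_of_adjoint (T : L2 I →L[ℂ] L2 I')
    (h : ∃ C : ℝ, 0 ≤ C ∧ ∀ (y : L2 I') (M : ℝ), 0 ≤ M → (∀ i, ‖y i‖ ≤ M) →
      ∀ i, ‖ContinuousLinearMap.adjoint T y i‖ ≤ C * M) : L1Bdd T := by
  classical
  obtain ⟨C, hC, h⟩ := h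
  refine ⟨C, hC, fun x hx => ?_⟩
  have key : ∀ s : Finset I', ∑ i ∈ s, ‖T x i‖ ≤ C * ∑' i, ‖x i‖ := by
    intro s
    let u : I' → ℂ := fun i => if T x i = 0 then 0 else T x i / ‖T x i‖
    have hu : ∀ i, ‖u i‖ ≤ 1 := fun i => by
      by_cases h0 : T x i = 0
      · simp [u, h0]
      · simp [u, h0]
    have hu' : ∀ i, star (u i) * T x i = ‖T x i‖ := fun i => by
      by_cases h0 : T x i = 0
      · simp [u, h0]
      · have h1 : (‖T x i‖ : ℂ) ≠ 0 := by simpa using h0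
        simp only [u, h0, if_false, Complex.star_def, map_div₀, Complex.conj_ofReal]
        rw [div_mul_eq_mul_div, Complex.conj_mul', pow_two, mul_div_assoc, div_self h1, mul_one]
    let y : L2 I' := ∑ i ∈ s, lp.single 2 i (u i)
    have hy : ∀ i, ‖y i‖ ≤ 1 := fun i => by
      have : y i = if i ∈ s then u i else 0 := by
        change lp.evalCLM ℂ (fun _ : I' => ℂ) 2 i y = _
        rw [map_sum]
        change ∑ j ∈ s, (lp.single 2 j (u j) : L2 I') i = _
        simp [Pi.single_apply]
      rw [this]
      split_ifs
      · exact hu i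
      · simp
    have h1 : inner ℂ y (T x) = ((∑ i ∈ s, ‖T x i‖ : ℝ) : ℂ) := by
      rw [sum_inner, Complex.ofReal_sum]
      refine Finset.sum_congr rfl fun i _ => ?_
      rw [lp.inner_single_left, ← hu' i]
      exact mul_comm _ _
    have h2 : HasSum (fun i => inner ℂ ((ContinuousLinearMap.adjoint T y) i) (x i))
        (inner ℂ (ContinuousLinearMap.adjoint T y) x) := lp.hasSum_inner _ _
    rw [ContinuousLinearMap.adjoint_inner_left, h1] at h2
    have h3 : ‖((∑ i ∈ s, ‖T x i‖ : ℝ) : ℂ)‖ ≤ C * ∑' i, ‖x i‖ := by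
      rw [← h2.tsum_eq]
      refine tsum_of_norm_bounded (hx.hasSum.mul_left C) fun i => ?_
      refine (norm_inner_le_norm _ _).trans ?_
      gcongr
      simpa using h y 1 zero_le_one hy i
    rw [Complex.norm_real] at h3
    exact (le_abs_self _).trans h3
  have hsum := summable_of_sum_le (fun _ => norm_nonneg _) key
  exact ⟨hsum, hsum.tsum_le_of_sum_le key⟩

variable [AddCommGroup Γ]

theorem IsGr.proj_comm {g : I → Γ} {g' : I' → Γ} {d : Γ} {b : L2 I →L[ℂ] L2 I'}
    (hb : IsGr g g' d b) (c : Γ) (x : L2 I) : b (proj g (c - d) x) = proj g' c (b x) := by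
  ext i
  have := hb (pointInd (c - d)) (fun _ => norm_pointInd_le _ _) x i
  rw [proj, this, proj_apply]
  by_cases h : g' i = c
  · rw [h, pointInd_self, pointInd_self]
  · rw [pointInd_of_ne h, pointInd_of_ne fun h' => h (sub_left_injective h')]

theorem WG.sup_bound {g : I → Γ} {g' : I' → Γ} {n : ℕ} (hg : FiberLE g n)
    {T : L2 I →L[ℂ] L2 I'} (hT : WG g g' T) :
    ∃ C : ℝ, 0 ≤ C ∧ ∀ (y : L2 I) (M : ℝ), 0 ≤ M → (∀ i, ‖y i‖ ≤ M) →
      ∀ i, ‖T y i‖ ≤ C * M := by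
  obtain ⟨J, b, d, hs, hT, hd⟩ := hT
  refine ⟨(∑' j, ‖b j‖) * n, by positivity, fun y M hM hy i => ?_⟩
  let ev : (L2 I →L[ℂ] L2 I') →L[ℂ] ℂ :=
    (lp.evalCLM ℂ (fun _ : I' => ℂ) 2 i).comp (ContinuousLinearMap.apply ℂ (L2 I') y)
  have h1 : HasSum (fun j => b j y i) (T y i) := hT.mapL ev
  have h2 : ∀ j, ‖b j y i‖ ≤ ‖b j‖ * (n * M) := by
    intro j
    have h3 : b j y i = b j (proj g (g' i - d j) y) i := by
      rw [(hd j).proj_comm, proj_apply, pointInd_self, one_mul]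
    rw [h3]
    refine (norm_coord_le _ _).trans (((b j).le_opNorm _).trans ?_)
    gcongr
    exact hg.norm_proj_le _ hM hy
  rw [← h1.tsum_eq, mul_assoc]
  exact tsum_of_norm_bounded (hs.hasSum.mul_right _) h2

theorem WG.sup_bound_of_left_inverse {g : I → Γ} {n : ℕ} (hg : FiberLE g n)
    {X Y : L2 I →L[ℂ] L2 I} (hX : WG g g X) (hY : Y.comp X = ContinuousLinearMap.id ℂ (L2 I)) :
    ∃ C : ℝ, 0 ≤ C ∧ ∀ (y : L2 I) (M : ℝ), 0 ≤ M → (∀ i, ‖X y i‖ ≤ M) →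
      ∀ i, ‖y i‖ ≤ C * M := by
  obtain ⟨J, b, d, hs, hX, hd⟩ := hX
  obtain ⟨C, hC, h⟩ := exists_bound_of_twisted_left_inverse b d hs (fun χ h0 hadd hn => by
    let χ' : Γ → ℂ := fun x => star (χ x)
    have hn' : ∀ x, ‖χ' x‖ = 1 := fun x => by rw [norm_star, hn]
    have hχ : ∀ x, χ x * χ' x = 1 := fun x => by
      change χ x * (starRingEnd ℂ) (χ x) = 1
      rw [Complex.mul_conj', hn]
      simp
    let Mχ : L2 I →L[ℂ] L2 I := diag (fun i => χ (g i)) (fun i => (hn _).le)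
    let Mχ' : L2 I →L[ℂ] L2 I := diag (fun i => χ' (g i)) (fun i => (hn' _).le)
    have hMM : Mχ.comp Mχ' = ContinuousLinearMap.id ℂ (L2 I) := by
      ext x i
      change χ (g i) * (χ' (g i) * x i) = x i
      rw [← mul_assoc, hχ, one_mul]
    have hMM' : Mχ'.comp Mχ = ContinuousLinearMap.id ℂ (L2 I) := by
      ext x i
      change χ' (g i) * (χ (g i) * x i) = x i
      rw [← mul_assoc, mul_comm (χ' _), hχ, one_mul]
    have hb : ∀ j, χ (d j) • b j = Mχ.comp ((b j).comp Mχ') := by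
      intro j
      ext x i
      have h1 := hd j χ' (fun _ => (hn' _).le) x i
      change χ (d j) * b j x i = χ (g i) * b j (Mχ' x) i
      rw [h1, ← mul_assoc]
      congr 1
      have h2 : χ (g i) = χ (g i - d j) * χ (d j) := by rw [← hadd, sub_add_cancel]
      rw [h2, mul_right_comm, hχ, one_mul]
    have hsum : HasSum (fun j => χ (d j) • b j) (Mχ.comp (X.comp Mχ')) := by
      simp only [hb]
      exact (hX.mapL ((ContinuousLinearMap.compL ℂ (L2 I) (L2 I) (L2 I)).flip Mχ')).mapL
        (ContinuousLinearMap.compL ℂ (L2 I) (L2 I) (L2 I) Mχ)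
    refine ⟨Mχ.comp (Y.comp Mχ'), ?_⟩
    rw [hsum.tsum_eq]
    ext1 x
    have e1 : ∀ z, Mχ' (Mχ z) = z := fun z => congrArg (fun T => T z) hMM'
    have e2 : ∀ z, Mχ (Mχ' z) = z := fun z => congrArg (fun T => T z) hMM
    have e3 : ∀ z, Y (X z) = z := fun z => congrArg (fun T => T z) hY
    simp only [ContinuousLinearMap.comp_apply, e1, e2, e3, ContinuousLinearMap.id_apply])
  refine ⟨C * n, by positivity, fun y M hM hy i => ?_⟩
  have h1 := h (fun c => proj g c y) ‖y‖ (n * M) (fun c => ?_) (by positivity) (fun c => ?_) (g i)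
  · have h2 := norm_coord_le (proj g (g i) y) i
    rw [proj_apply, pointInd_self, one_mul] at h2
    rw [mul_assoc]
    exact h2.trans h1
  · have h2 := (proj g c).le_of_opNorm_le (norm_wpull_le _) y
    rwa [one_mul] at h2
  · have h2 : HasSum (fun j => b j (proj g (c - d j) y)) (proj g c (X y)) := by
      simp only [fun j => (hd j).proj_comm c y]
      exact hX.mapL ((proj g c).comp (ContinuousLinearMap.apply ℂ (L2 I) y))
    rw [h2.tsum_eq]
    exact hg.norm_proj_le c hM hy

theorem WG.l1Bdd {g : I → Γ} {g' : I' → Γ} {n : ℕ} (hg : FiberLE g' n) {T : L2 I →L[ℂ] L2 I'}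
    (hT : WG g' g (ContinuousLinearMap.adjoint T)) : L1Bdd T :=
  l1Bdd_of_adjoint T (hT.sup_bound hg)

theorem WG.l1Bdd_inverse {g : I → Γ} {n : ℕ} (hg : FiberLE g n) {X Y : L2 I →L[ℂ] L2 I}
    (hX : WG g g (ContinuousLinearMap.adjoint X))
    (hXY : X.comp Y = ContinuousLinearMap.id ℂ (L2 I))
    (hYX : Y.comp X = ContinuousLinearMap.id ℂ (L2 I)) : L1Bdd Y := by
  have h1 := congrArg ContinuousLinearMap.adjoint hXY
  have h2 := congrArg ContinuousLinearMap.adjoint hYX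
  rw [ContinuousLinearMap.adjoint_comp, ContinuousLinearMap.adjoint_id] at h1 h2
  obtain ⟨C, hC, h⟩ := hX.sup_bound_of_left_inverse hg h1
  refine l1Bdd_of_adjoint Y ⟨C, hC, fun y M hM hy => h _ M hM fun i => ?_⟩
  rw [← ContinuousLinearMap.comp_apply, h2]
  exact hy i

end Bounds

end ToeplitzCorona

namespace ToeplitzCorona

open scoped Topology InnerProduct

section Basis

variable {I I' : Type}

/-- The standard basis vector. -/
def bas (q : I) : L2 I := by
  classical exact lp.single 2 q (1 : ℂ)

theorem bas_eq [DecidableEq I] (q : I) : bas q = lp.single 2 q (1 : ℂ) := by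
  unfold bas
  congr
  exact Subsingleton.elim _ _

theorem bas_self (q : I) : bas q q = 1 := by
  classical
  rw [bas_eq, lp.single_apply, Pi.single_eq_same]

theorem bas_of_ne {q r : I} (h : r ≠ q) : bas q r = 0 := by
  classical
  rw [bas_eq, lp.single_apply, Pi.single_eq_of_ne h]

theorem inner_bas_left (q : I) (x : L2 I) : inner ℂ (bas q) x = x q := by
  classical
  rw [bas_eq, lp.inner_single_left]
  simp

theorem hasSum_bas (x : L2 I) : HasSum (fun q => x q • bas q) x := by
  classical
  refine (lp.hasSum_single (by norm_num) x).congr_fun fun q => ?_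
  rw [bas_eq, ← lp.single_smul, smul_eq_mul, mul_one]

theorem hasSum_apply_bas (T : L2 I →L[ℂ] L2 I') (x : L2 I) (r : I') :
    HasSum (fun q => x q * T (bas q) r) (T x r) := by
  have h := (hasSum_bas x).mapL ((lp.evalCLM ℂ (fun _ : I' => ℂ) 2 r).comp T)
  refine h.congr_fun fun q => ?_
  rw [map_smul]
  rfl

theorem clm_ext_bas {T T' : L2 I →L[ℂ] L2 I'} (h : ∀ q r, T (bas q) r = T' (bas q) r) :
    T = T' := by
  ext x r
  refine (hasSum_apply_bas T x r).unique ?_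
  simp only [h]
  exact hasSum_apply_bas T' x r

theorem adjoint_bas (T : L2 I →L[ℂ] L2 I') (q : I) (r : I') :
    ContinuousLinearMap.adjoint T (bas r) q = star (T (bas q) r) := by
  rw [← inner_bas_left q, ContinuousLinearMap.adjoint_inner_right, ← inner_conj_symm,
    inner_bas_left]
  rfl

theorem summable_bas (q : I) : Summable fun r => ‖bas q r‖ :=
  summable_of_ne_finset_zero (s := {q}) fun r hr => by
    rw [bas_of_ne (by simpa using hr), norm_zero]

end Basis

section Toeplitz

variable {Γ : Type} {Δ : Set Γ} {m n : ℕ}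

/-- The degree of a basis vector of the column space. -/
def deg (q : Fin n × ↥Δ) : Γ := q.2.1

theorem fiberLE_deg : FiberLE (deg : Fin n × ↥Δ → Γ) n := by
  intro c s hs
  classical
  calc s.card = (s.image Prod.fst).card := by
        rw [Finset.card_image_of_injOn]
        intro q hq r hr h
        exact Prod.ext h (Subtype.ext ((hs q hq).trans (hs r hr).symm))
    _ ≤ n := by simpa using Finset.card_le_univ (s.image Prod.fst)

theorem summable_symbol {c : Fin m → Fin n → Γ → ℂ} (hc : ∀ i j, Summable fun x => ‖c i j x‖) :
    Summable fun q : Fin m × Fin n × Γ => ‖c q.1 q.2.1 q.2.2‖ := by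
  rw [summable_prod_of_nonneg fun _ => norm_nonneg _]
  refine ⟨fun i => ?_, Summable.of_finite⟩
  rw [summable_prod_of_nonneg fun _ => norm_nonneg _]
  exact ⟨fun j => hc i j, Summable.of_finite⟩

variable [AddCommGroup Γ]

/-- `T` has the Toeplitz matrix with symbol coefficients `c`. -/
def Rep (c : Fin m → Fin n → Γ → ℂ) (T : L2 (Fin n × ↥Δ) →L[ℂ] L2 (Fin m × ↥Δ)) : Prop :=
  ∀ q r, T (bas q) r = c r.1 q.1 (deg r - deg q)

theorem Rep.unique {c : Fin m → Fin n → Γ → ℂ}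
    {T T' : L2 (Fin n × ↥Δ) →L[ℂ] L2 (Fin m × ↥Δ)} (h : Rep c T) (h' : Rep c T') : T = T' :=
  clm_ext_bas fun q r => by rw [h, h']

theorem Rep.sub {c c' : Fin m → Fin n → Γ → ℂ}
    {T T' : L2 (Fin n × ↥Δ) →L[ℂ] L2 (Fin m × ↥Δ)} (h : Rep c T) (h' : Rep c' T') :
    Rep (fun i j x => c i j x - c' i j x) (T - T') := fun q r =>
  congrArg₂ (· - ·) (h q r) (h' q r)

theorem Rep.adjoint {c : Fin m → Fin n → Γ → ℂ}
    {T : L2 (Fin n × ↥Δ) →L[ℂ] L2 (Fin m × ↥Δ)} (h : Rep c T) :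
    Rep (fun j i x => star (c i j (-x))) (ContinuousLinearMap.adjoint T) := fun q r => by
  rw [adjoint_bas, h, ← neg_sub (deg r)]

open Classical in
/-- The weight of the elementary Toeplitz operator `e_{(j,μ)} ↦ e_{(i,μ+x)}`. -/
def elemWeight (Δ : Set Γ) (i : Fin m) (j : Fin n) (x : Γ) :
    Weight (Fin n × ↥Δ) (Fin m × ↥Δ) where
  w r := if r.1 = i ∧ r.2.1 - x ∈ Δ then 1 else 0
  s r := (j, if h : r.2.1 - x ∈ Δ then ⟨r.2.1 - x, h⟩ else r.2)
  norm_le r := by split_ifs <;> simp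
  inj r r' h h' hs := by
    have hr : r.1 = i ∧ r.2.1 - x ∈ Δ := by
      by_contra h0
      exact h (if_neg h0)
    have hr' : r'.1 = i ∧ r'.2.1 - x ∈ Δ := by
      by_contra h0
      exact h' (if_neg h0)
    have h2 := congrArg (fun q => q.2.1) hs
    simp only [dif_pos hr.2, dif_pos hr'.2] at h2
    exact Prod.ext (hr.1.trans hr'.1.symm) (Subtype.ext (sub_left_injective h2))

open Classical in
theorem elemWeight_bas (i : Fin m) (j : Fin n) (x : Γ) (q : Fin n × ↥Δ) (r : Fin m × ↥Δ) :
    wpull (elemWeight Δ i j x) (bas q) r =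
      if (i, j, x) = (r.1, q.1, deg r - deg q) then 1 else 0 := by
  rw [wpull_apply]
  split_ifs with h
  · obtain ⟨rfl, rfl, rfl⟩ : i = r.1 ∧ j = q.1 ∧ x = deg r - deg q := by simpa using h
    have h1 : r.2.1 - (deg r - deg q) = q.2.1 := by simp [deg]
    have h2 : r.2.1 - (deg r - deg q) ∈ Δ := by rw [h1]; exact q.2.2
    have h3 : (elemWeight Δ r.1 q.1 (deg r - deg q)).s r = q := by
      refine Prod.ext rfl (Subtype.ext ?_)
      exact (congrArg Subtype.val (dif_pos h2)).trans h1
    rw [h3, bas_self, mul_one]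
    exact if_pos ⟨rfl, h2⟩
  · by_cases h1 : r.1 = i ∧ r.2.1 - x ∈ Δ
    · rw [bas_of_ne, mul_zero]
      intro h2
      apply h
      have h3 : j = q.1 := congrArg Prod.fst h2
      have h4 := congrArg (fun q => q.2.1) h2
      simp only [elemWeight, dif_pos h1.2] at h4
      rw [← h1.1, ← h3, deg, deg, ← h4, sub_sub_cancel]
    · have : (elemWeight Δ i j x).w r = 0 := if_neg h1
      rw [this, zero_mul]

theorem isGr_elemWeight (i : Fin m) (j : Fin n) (x : Γ) :
    IsGr deg deg x (wpull (elemWeight Δ i j x)) := by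
  classical
  refine isGr_wpull _ fun r hr => ?_
  have h1 : r.1 = i ∧ r.2.1 - x ∈ Δ := by
    by_contra h0
    exact hr (if_neg h0)
  simp only [elemWeight, deg, dif_pos h1.2, sub_add_cancel]

theorem exists_rep (Δ : Set Γ) {c : Fin m → Fin n → Γ → ℂ}
    (hc : ∀ i j, Summable fun x => ‖c i j x‖) :
    ∃ T : L2 (Fin n × ↥Δ) →L[ℂ] L2 (Fin m × ↥Δ), Rep c T ∧ WG deg deg T ∧
      ‖T‖ ≤ ∑ i, ∑ j, ∑' x, ‖c i j x‖ := by
  classical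
  have hs := summable_symbol hc
  let b : Fin m × Fin n × Γ → L2 (Fin n × ↥Δ) →L[ℂ] L2 (Fin m × ↥Δ) :=
    fun q => c q.1 q.2.1 q.2.2 • wpull (elemWeight Δ q.1 q.2.1 q.2.2)
  have hb : ∀ q, ‖b q‖ ≤ ‖c q.1 q.2.1 q.2.2‖ := fun q => by
    rw [norm_smul]
    exact mul_le_of_le_one_right (norm_nonneg _) (norm_wpull_le _)
  have hbs : Summable fun q => ‖b q‖ := Summable.of_nonneg_of_le (fun _ => norm_nonneg _) hb hs
  refine ⟨∑' q, b q, fun q r => ?_, ⟨_, b, fun q => q.2.2, hbs, hbs.of_norm.hasSum,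
    fun q => (isGr_elemWeight _ _ _).smul _⟩, ?_⟩
  · have h := hbs.of_norm.hasSum.mapL ((lp.evalCLM ℂ (fun _ : Fin m × ↥Δ => ℂ) 2 r).comp
      (ContinuousLinearMap.apply ℂ (L2 (Fin m × ↥Δ)) (bas q)))
    refine h.unique ?_
    refine (hasSum_ite_eq (r.1, q.1, deg r - deg q) (c r.1 q.1 (deg r - deg q))).congr_fun
      fun z => ?_
    change c z.1 z.2.1 z.2.2 * wpull (elemWeight Δ z.1 z.2.1 z.2.2) (bas q) r = _
    rw [elemWeight_bas]
    by_cases hz : z = (r.1, q.1, deg r - deg q)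
    · subst hz
      simp
    · rw [if_neg hz, if_neg hz, mul_zero]
  · refine (tsum_of_norm_bounded hs.hasSum hb).trans_eq ?_
    rw [hs.tsum_prod, tsum_fintype]
    refine Finset.sum_congr rfl fun i _ => ?_
    have h1 : Summable fun q : Fin n × Γ => ‖c i q.1 q.2‖ := hs.prod_factor i
    rw [h1.tsum_prod, tsum_fintype]

theorem Rep.wg {c : Fin m → Fin n → Γ → ℂ} (hc : ∀ i j, Summable fun x => ‖c i j x‖)
    {T : L2 (Fin n × ↥Δ) →L[ℂ] L2 (Fin m × ↥Δ)} (h : Rep c T) : WG deg deg T := by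
  obtain ⟨T', h1, h2, -⟩ := exists_rep Δ hc
  rwa [h.unique h1]

theorem Rep.norm_le {c : Fin m → Fin n → Γ → ℂ} (hc : ∀ i j, Summable fun x => ‖c i j x‖)
    {T : L2 (Fin n × ↥Δ) →L[ℂ] L2 (Fin m × ↥Δ)} (h : Rep c T) :
    ‖T‖ ≤ ∑ i, ∑ j, ∑' x, ‖c i j x‖ := by
  obtain ⟨T', h1, -, h2⟩ := exists_rep Δ hc
  rwa [h.unique h1]

theorem Rep.wg_adjoint {c : Fin m → Fin n → Γ → ℂ} (hc : ∀ i j, Summable fun x => ‖c i j x‖)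
    {T : L2 (Fin n × ↥Δ) →L[ℂ] L2 (Fin m × ↥Δ)} (h : Rep c T) :
    WG deg deg (ContinuousLinearMap.adjoint T) := by
  have hs : ∀ (j : Fin n) (i : Fin m), Summable fun x => ‖star (c i j (-x))‖ := by
    intro j i
    simp only [norm_star]
    exact ((Equiv.neg Γ).summable_iff (f := fun x => ‖c i j x‖)).2 (hc i j)
  exact h.adjoint.wg (c := fun j i x => star (c i j (-x))) hs

/-- The backward shift by `x ∈ Δ`. -/
def backWeight (hΔ : ∀ x ∈ Δ, ∀ y ∈ Δ, x + y ∈ Δ) (n : ℕ) (x : ↥Δ) :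
    Weight (Fin n × ↥Δ) (Fin n × ↥Δ) where
  w _ := 1
  s r := (r.1, ⟨r.2.1 + x.1, hΔ _ r.2.2 _ x.2⟩)
  norm_le _ := by simp
  inj r r' _ _ h := by
    have h1 : r.1 = r'.1 := congrArg (fun q => q.1) h
    have h2 : r.2.1 + x.1 = r'.2.1 + x.1 := congrArg (fun q => q.2.1) h
    exact Prod.ext h1 (Subtype.ext (add_left_injective _ h2))

theorem wpull_backWeight (hΔ : ∀ x ∈ Δ, ∀ y ∈ Δ, x + y ∈ Δ) (x : ↥Δ) (z : L2 (Fin n × ↥Δ))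
    (r : Fin n × ↥Δ) : wpull (backWeight hΔ n x) z r = z (r.1, ⟨r.2.1 + x.1, hΔ _ r.2.2 _ x.2⟩) :=
  one_mul _

/-- Adjoints of analytic Toeplitz operators commute with backward shifts. -/
theorem Rep.adjoint_backward (hΔ : ∀ x ∈ Δ, ∀ y ∈ Δ, x + y ∈ Δ) {c : Fin m → Fin n → Γ → ℂ}
    (hc : ∀ i j x, c i j x ≠ 0 → x ∈ Δ) {T : L2 (Fin n × ↥Δ) →L[ℂ] L2 (Fin m × ↥Δ)} (h : Rep c T)
    (x : ↥Δ) (z : L2 (Fin m × ↥Δ)) :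
    wpull (backWeight hΔ n x) (ContinuousLinearMap.adjoint T z) =
      ContinuousLinearMap.adjoint T (wpull (backWeight hΔ m x) z) := by
  suffices hcomp : (wpull (backWeight hΔ n x)).comp (ContinuousLinearMap.adjoint T) =
      (ContinuousLinearMap.adjoint T).comp (wpull (backWeight hΔ m x)) from
    congrArg (fun S => S z) hcomp
  refine clm_ext_bas fun q r => ?_
  rw [ContinuousLinearMap.comp_apply, ContinuousLinearMap.comp_apply, wpull_backWeight, h.adjoint]
  by_cases hq : q.2.1 - x.1 ∈ Δ
  · have h1 : wpull (backWeight hΔ m x) (bas q) = bas (q.1, ⟨q.2.1 - x.1, hq⟩) := by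
      ext r
      rw [wpull_backWeight]
      by_cases hr : r = (q.1, ⟨q.2.1 - x.1, hq⟩)
      · subst hr
        rw [bas_self]
        convert bas_self q
        exact sub_add_cancel _ _
      · rw [bas_of_ne hr, bas_of_ne]
        intro h2
        refine hr (Prod.ext (congrArg (fun q => q.1) h2) (Subtype.ext ?_))
        have h3 : r.2.1 + x.1 = q.2.1 := congrArg (fun q => q.2.1) h2
        exact eq_sub_of_add_eq h3
    rw [h1, h.adjoint]
    simp only [deg]
    congr 3
    abel
  · have h1 : wpull (backWeight hΔ m x) (bas q) = 0 := by
      ext r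
      rw [wpull_backWeight, bas_of_ne]
      · rfl
      · intro h2
        have h3 : r.2.1 + x.1 = q.2.1 := congrArg (fun q => q.2.1) h2
        refine hq ?_
        rw [← h3, add_sub_cancel_right]
        exact r.2.2
    rw [h1, map_zero]
    change star _ = (0 : ℂ)
    rw [star_eq_zero]
    by_contra h2
    have h3 := hΔ _ (hc _ _ _ h2) _ r.2.2
    refine hq ?_
    convert h3 using 1
    simp only [deg]
    abel

end Toeplitz

end ToeplitzCorona

namespace ToeplitzCorona

open scoped Topology InnerProduct

section Summable

variable {I I' : Type}

/-- Absolute summability of the coordinates. -/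
def S1 (x : L2 I) : Prop := Summable fun i => ‖x i‖

/-- The `ℓ¹` norm of the coordinates. -/
def n1 (x : L2 I) : ℝ := ∑' i, ‖x i‖

theorem n1_nonneg (x : L2 I) : 0 ≤ n1 x := tsum_nonneg fun _ => norm_nonneg _

theorem S1.add {x y : L2 I} (hx : S1 x) (hy : S1 y) : S1 (x + y) :=
  Summable.of_nonneg_of_le (fun _ => norm_nonneg _) (fun i => norm_add_le (x i) (y i))
    (Summable.add hx hy)

theorem S1.smul {x : L2 I} (hx : S1 x) (c : ℂ) : S1 (c • x) :=
  (hx.mul_left ‖c‖).congr fun i => (norm_smul c (x i)).symm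

theorem S1.sub {x y : L2 I} (hx : S1 x) (hy : S1 y) : S1 (x - y) := by
  have := hx.add (hy.smul (-1))
  rwa [neg_one_smul, ← sub_eq_add_neg] at this

theorem S1.sum {ι : Type*} (s : Finset ι) {x : ι → L2 I} (hx : ∀ i, S1 (x i)) :
    S1 (∑ i ∈ s, x i) := by
  classical
  induction s using Finset.induction_on with
  | empty =>
    rw [Finset.sum_empty]
    exact summable_zero.congr fun i => norm_zero.symm
  | insert a s ha ih =>
    rw [Finset.sum_insert ha]
    exact (hx a).add ih

theorem n1_add_le {x y : L2 I} (hx : S1 x) (hy : S1 y) : n1 (x + y) ≤ n1 x + n1 y :=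
  ((hx.add hy).tsum_le_tsum (fun i => norm_add_le (x i) (y i)) (Summable.add hx hy)).trans_eq
    (hx.tsum_add hy)

theorem n1_smul (x : L2 I) (c : ℂ) : n1 (c • x) = ‖c‖ * n1 x := by
  unfold n1
  rw [← tsum_mul_left]
  exact tsum_congr fun i => norm_smul c (x i)

theorem L1Bdd.s1 {T : L2 I →L[ℂ] L2 I'} (h : L1Bdd T) {x : L2 I} (hx : S1 x) : S1 (T x) := by
  obtain ⟨C, -, h⟩ := h
  exact (h x hx).1

end Summable

section Extension

variable {Γ : Type} {Δ : Set Γ} {n : ℕ}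

open Classical in
/-- The coordinates of the `i`-th entry of a column, extended by zero off `Δ`. -/
def ext (x : L2 (Fin n × ↥Δ)) (i : Fin n) (lam : Γ) : ℂ :=
  if h : lam ∈ Δ then x (i, ⟨lam, h⟩) else 0

theorem ext_mem (x : L2 (Fin n × ↥Δ)) (i : Fin n) (lam : ↥Δ) :
    ext x i lam.1 = x (i, lam) := dif_pos lam.2

theorem ext_of_notMem (x : L2 (Fin n × ↥Δ)) (i : Fin n) {lam : Γ} (h : lam ∉ Δ) :
    ext x i lam = 0 := dif_neg h

theorem mem_of_ext_ne {x : L2 (Fin n × ↥Δ)} {i : Fin n} {lam : Γ} (h : ext x i lam ≠ 0) :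
    lam ∈ Δ := by
  by_contra h0
  exact h (ext_of_notMem x i h0)

theorem ext_add (x y : L2 (Fin n × ↥Δ)) (i : Fin n) (lam : Γ) :
    ext (x + y) i lam = ext x i lam + ext y i lam := by
  by_cases h : lam ∈ Δ
  · rw [ext_mem _ i ⟨lam, h⟩, ext_mem _ i ⟨lam, h⟩, ext_mem _ i ⟨lam, h⟩]
    rfl
  · rw [ext_of_notMem _ _ h, ext_of_notMem _ _ h, ext_of_notMem _ _ h, add_zero]

theorem ext_smul (a : ℂ) (x : L2 (Fin n × ↥Δ)) (i : Fin n) (lam : Γ) :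
    ext (a • x) i lam = a * ext x i lam := by
  by_cases h : lam ∈ Δ
  · rw [ext_mem _ i ⟨lam, h⟩, ext_mem _ i ⟨lam, h⟩]
    rfl
  · rw [ext_of_notMem _ _ h, ext_of_notMem _ _ h, mul_zero]

theorem ext_sub (x y : L2 (Fin n × ↥Δ)) (i : Fin n) (lam : Γ) :
    ext (x - y) i lam = ext x i lam - ext y i lam := by
  rw [sub_eq_add_neg, ← neg_one_smul ℂ, ext_add, ext_smul, neg_one_mul, ← sub_eq_add_neg]

theorem hasSum_restrict {E : Type*} [AddCommMonoid E] [TopologicalSpace E] {h : Γ → E} {a : E}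
    (h0 : ∀ lam, lam ∉ Δ → h lam = 0) : HasSum (fun lam : ↥Δ => h lam.1) a ↔ HasSum h a :=
  hasSum_subtype_iff_of_support_subset fun lam hlam => by
    by_contra hn
    exact hlam (h0 lam hn)

theorem hasSum_norm_ext {x : L2 (Fin n × ↥Δ)} (hx : S1 x) (i : Fin n) :
    HasSum (fun lam => ‖ext x i lam‖) (∑' lam : ↥Δ, ‖x (i, lam)‖) := by
  rw [← hasSum_restrict (Δ := Δ) fun lam hlam => by rw [ext_of_notMem x i hlam, norm_zero]]
  simp only [ext_mem]
  exact (hx.prod_factor i).hasSum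

theorem sum_tsum_norm_ext {x : L2 (Fin n × ↥Δ)} (hx : S1 x) :
    ∑ i, ∑' lam, ‖ext x i lam‖ = n1 x := by
  unfold n1
  rw [hx.tsum_prod, tsum_fintype]
  exact Finset.sum_congr rfl fun i _ => (hasSum_norm_ext hx i).tsum_eq

end Extension

section Functions

variable {k : ℕ} {Δ : Set (Fin k → ℝ)} {m n : ℕ}

/-- The entries of the column function with coordinates `x`. -/
def fn (x : L2 (Fin n × ↥Δ)) (i : Fin n) : APB k := synth (ext x i)

theorem bohrCoeff_fn {x : L2 (Fin n × ↥Δ)} (hx : S1 x) (i : Fin n) (lam : Fin k → ℝ) :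
    bohrCoeff k (fn x i) lam = ext x i lam :=
  bohrCoeff_synth (hasSum_norm_ext hx i).summable lam

theorem APWmem_fn {x : L2 (Fin n × ↥Δ)} (hx : S1 x) (i : Fin n) : APWmem k Δ (fn x i) :=
  APWmem_synth (hasSum_norm_ext hx i).summable fun _ => mem_of_ext_ne

theorem fn_add {x y : L2 (Fin n × ↥Δ)} (hx : S1 x) (hy : S1 y) (i : Fin n) :
    fn (x + y) i = fn x i + fn y i :=
  eq_of_bohrCoeff (APWmem_fn (hx.add hy) i).1.1
    (add_mem (APWmem_fn hx i).1.1 (APWmem_fn hy i).1.1) fun lam => by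
      rw [bohrCoeff_add (APWmem_fn hx i).1.1 (APWmem_fn hy i).1.1, bohrCoeff_fn (hx.add hy),
        bohrCoeff_fn hx, bohrCoeff_fn hy, ext_add]

theorem fn_smul (a : ℂ) {x : L2 (Fin n × ↥Δ)} (hx : S1 x) (i : Fin n) :
    fn (a • x) i = a • fn x i :=
  eq_of_bohrCoeff (APWmem_fn (hx.smul a) i).1.1
    ((APalg k).smul_mem (APWmem_fn hx i).1.1 a) fun lam => by
      rw [bohrCoeff_smul (APWmem_fn hx i).1.1, bohrCoeff_fn (hx.smul a), bohrCoeff_fn hx, ext_smul]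

theorem fn_sum_smul {ι : Type*} (s : Finset ι) (a : ι → ℂ) {x : ι → L2 (Fin n × ↥Δ)}
    (hx : ∀ j, S1 (x j)) (i : Fin n) :
    fn (∑ j ∈ s, a j • x j) i = ∑ j ∈ s, a j • fn (x j) i := by
  classical
  induction s using Finset.induction_on with
  | empty =>
    have := fn_smul 0 (S1.sum ∅ hx) i
    rwa [zero_smul, zero_smul] at this
  | insert b s hb ih =>
    rw [Finset.sum_insert hb, Finset.sum_insert hb,
      fn_add ((hx b).smul _) (S1.sum s fun j => (hx j).smul _), fn_smul _ (hx b), ih]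

/-- Analytic Toeplitz operators act as multiplication operators. -/
theorem Rep.sum_mul_fn (hΔ : ∀ x ∈ Δ, ∀ y ∈ Δ, x + y ∈ Δ) {F : Fin m → Fin n → APB k}
    (hF : ∀ i j, APWmem k Δ (F i j)) {T : L2 (Fin n × ↥Δ) →L[ℂ] L2 (Fin m × ↥Δ)}
    (hT : Rep (fun i j => bohrCoeff k (F i j)) T) {x : L2 (Fin n × ↥Δ)} (hx : S1 x)
    (hTx : S1 (T x)) (i : Fin m) : ∑ j, F i j * fn x j = fn (T x) i := by
  have hmem : APWmem k Δ (∑ j, F i j * fn x j) :=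
    APWmem_sum _ fun j _ => APWmem_mul hΔ (hF i j) (APWmem_fn hx j)
  refine eq_of_bohrCoeff hmem.1.1 (APWmem_fn hTx i).1.1 fun lam => ?_
  rw [bohrCoeff_fn hTx]
  by_cases hlam : lam ∈ Δ
  · rw [ext_mem (T x) i ⟨lam, hlam⟩,
      bohrCoeff_sum _ fun j => mul_mem (hF i j).1.1 (APWmem_fn hx j).1.1]
    have h1 := hasSum_apply_bas T x (i, ⟨lam, hlam⟩)
    refine (hasSum_fintype _).unique (h1.prod_fiberwise fun j => ?_)
    have h2 := hasSum_bohrCoeff_mul (APWmem_fn hx j).1.1 (APWmem_fn hx j).2 (hF i j).1.1 lam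
    rw [mul_comm (fn x j), ← hasSum_restrict (Δ := Δ) fun mu hmu => by
      rw [bohrCoeff_fn hx, ext_of_notMem _ _ hmu, zero_mul]] at h2
    refine h2.congr_fun fun mu => ?_
    rw [bohrCoeff_fn hx, ext_mem, hT]
    rfl
  · rw [ext_of_notMem _ _ hlam]
    by_contra h0
    exact hlam (hmem.1.2 h0)

/-- The squared pointwise norm of a column function. -/
def sqFn (x : L2 (Fin n × ↥Δ)) : APB k := ∑ i, star (fn x i) * fn x i

theorem sqFn_apply (x : L2 (Fin n × ↥Δ)) (s : Fin k → ℝ) :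
    sqFn x s = ((∑ i, ‖fn x i s‖ ^ 2 : ℝ) : ℂ) := by
  rw [sqFn, BoundedContinuousFunction.coe_sum, Finset.sum_apply, Complex.ofReal_sum]
  refine Finset.sum_congr rfl fun i _ => ?_
  change star (fn x i s) * fn x i s = _
  rw [Complex.star_def, Complex.conj_mul']
  norm_cast

theorem sqFn_mem {x : L2 (Fin n × ↥Δ)} (hx : S1 x) : sqFn x ∈ APalg k :=
  sum_mem fun i _ => mul_mem (star_mem_APalg (APWmem_fn hx i).1.1) (APWmem_fn hx i).1.1

theorem star_sqFn (x : L2 (Fin n × ↥Δ)) : star (sqFn x) = sqFn x := by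
  ext s
  change star (sqFn x s) = sqFn x s
  rw [sqFn_apply, Complex.star_def, Complex.conj_ofReal]

theorem hasSum_sqFn {x : L2 (Fin n × ↥Δ)} (hx : S1 x) (lam : Fin k → ℝ) (i : Fin n) :
    HasSum (fun mu : ↥Δ => star (x (i, mu)) * ext x i (lam + mu.1))
      (bohrCoeff k ⇑(star (fn x i) * fn x i) lam) := by
  have h2 := hasSum_bohrCoeff_star_mul (APWmem_fn hx i).1.1 (APWmem_fn hx i).2
    (APWmem_fn hx i).1.1 lam
  rw [← hasSum_restrict (Δ := Δ) fun mu hmu => by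
      rw [bohrCoeff_fn hx, ext_of_notMem _ _ hmu, star_zero, zero_mul]] at h2
  refine h2.congr_fun fun mu => ?_
  rw [bohrCoeff_fn hx, bohrCoeff_fn hx, ext_mem]

theorem bohrCoeff_sqFn {x : L2 (Fin n × ↥Δ)} (hx : S1 x) (lam : Fin k → ℝ) :
    bohrCoeff k (sqFn x) lam = ∑ i, bohrCoeff k ⇑(star (fn x i) * fn x i) lam :=
  bohrCoeff_sum _ (fun i => mul_mem (star_mem_APalg (APWmem_fn hx i).1.1) (APWmem_fn hx i).1.1) lam

theorem bohrCoeff_sqFn_mem (hΔ : ∀ x ∈ Δ, ∀ y ∈ Δ, x + y ∈ Δ) {x : L2 (Fin n × ↥Δ)} (hx : S1 x)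
    (lam : ↥Δ) : bohrCoeff k (sqFn x) lam.1 = inner ℂ x (wpull (backWeight hΔ n lam) x) := by
  rw [bohrCoeff_sqFn hx]
  refine (hasSum_fintype _).unique
    ((lp.hasSum_inner x (wpull (backWeight hΔ n lam) x)).prod_fiberwise fun i => ?_)
  refine (hasSum_sqFn hx lam.1 i).congr_fun fun mu => ?_
  rw [wpull_backWeight, add_comm lam.1, ext_mem x i ⟨mu.1 + lam.1, hΔ _ mu.2 _ lam.2⟩,
    RCLike.inner_apply, mul_comm]
  rfl

theorem bohrCoeff_sqFn_eq_zero (hd : ∀ x ∈ Δ, ∀ y ∈ Δ, x - y ∈ Δ ∨ y - x ∈ Δ)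
    {x : L2 (Fin n × ↥Δ)} (hx : S1 x) {lam : Fin k → ℝ} (h : lam ∉ Δ) (h' : -lam ∉ Δ) :
    bohrCoeff k (sqFn x) lam = 0 := by
  rw [bohrCoeff_sqFn hx]
  refine Finset.sum_eq_zero fun i _ => (hasSum_sqFn hx lam i).unique ?_
  refine hasSum_zero.congr_fun fun mu => ?_
  rw [ext_of_notMem, mul_zero]
  intro h1
  rcases hd _ h1 _ mu.2 with h2 | h2
  · rw [add_sub_cancel_right] at h2
    exact h h2
  · rw [sub_add_cancel_right] at h2
    exact h' h2

theorem bohrCoeff_sqFn_neg {x : L2 (Fin n × ↥Δ)} (hx : S1 x) (lam : Fin k → ℝ) :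
    bohrCoeff k (sqFn x) (-lam) = star (bohrCoeff k (sqFn x) lam) := by
  have := bohrCoeff_star (sqFn_mem hx) (-lam)
  rwa [star_sqFn, neg_neg] at this

theorem bohrCoeff_sqFn_zero (hΔ : ∀ x ∈ Δ, ∀ y ∈ Δ, x + y ∈ Δ) (h0 : (0 : Fin k → ℝ) ∈ Δ)
    {x : L2 (Fin n × ↥Δ)} (hx : S1 x) : bohrCoeff k (sqFn x) 0 = ((‖x‖ ^ 2 : ℝ) : ℂ) := by
  have h1 : wpull (backWeight hΔ n ⟨0, h0⟩) x = x := by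
    ext r
    rw [wpull_backWeight]
    exact congrArg x (Prod.ext rfl (Subtype.ext (add_zero r.2.1)))
  rw [bohrCoeff_sqFn_mem hΔ hx ⟨0, h0⟩, h1, inner_self_eq_norm_sq_to_K]
  norm_cast

theorem norm_le_of_pointwise (hΔ : ∀ x ∈ Δ, ∀ y ∈ Δ, x + y ∈ Δ) (h0 : (0 : Fin k → ℝ) ∈ Δ)
    {x : L2 (Fin n × ↥Δ)} {y : L2 (Fin m × ↥Δ)} (hx : S1 x) (hy : S1 y)
    (h : ∀ s, ∑ i, ‖fn x i s‖ ^ 2 ≤ ∑ i, ‖fn y i s‖ ^ 2) : ‖x‖ ≤ ‖y‖ := by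
  have h1 := tendsto_boxAvg_bohrCoeff (sqFn_mem hx) 0
  have h2 := tendsto_boxAvg_bohrCoeff (sqFn_mem hy) 0
  rw [neg_zero, apExp_zero, one_mul, bohrCoeff_sqFn_zero hΔ h0 hx] at h1
  rw [neg_zero, apExp_zero, one_mul, bohrCoeff_sqFn_zero hΔ h0 hy] at h2
  have h3 := (Complex.continuous_re.tendsto _).comp (h2.sub h1)
  rw [← Complex.ofReal_sub, Complex.ofReal_re] at h3
  have h4 : 0 ≤ ‖y‖ ^ 2 - ‖x‖ ^ 2 := by
    refine ge_of_tendsto h3 ?_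
    filter_upwards [eventually_gt_atTop 0] with T hT
    have h5 := le_re_boxAvg hT (sqFn y + (-1 : ℂ) • sqFn x) (c := 0) fun s => by
      change 0 ≤ (sqFn y s + (-1 : ℂ) * sqFn x s).re
      rw [sqFn_apply, sqFn_apply, neg_one_mul, ← sub_eq_add_neg, ← Complex.ofReal_sub,
        Complex.ofReal_re]
      exact sub_nonneg.2 (h s)
    rw [boxAvg_add, boxAvg_smul, neg_one_mul, ← sub_eq_add_neg] at h5
    exact h5
  exact le_of_sq_le_sq (sub_nonneg.1 h4) (norm_nonneg _)

end Functions

end ToeplitzCorona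

namespace ToeplitzCorona

open scoped Topology InnerProduct ComplexOrder

variable {k p m n : ℕ} {Δ : Set (Fin k → ℝ)}

/-- The positive cone of a total order on the group it generates. -/
structure IsCone (Δ : Set (Fin k → ℝ)) : Prop where
  zero_mem : (0 : Fin k → ℝ) ∈ Δ
  add_mem : ∀ x ∈ Δ, ∀ y ∈ Δ, x + y ∈ Δ
  total : ∀ x ∈ Δ, ∀ y ∈ Δ, x - y ∈ Δ ∨ y - x ∈ Δ
  antisymm : ∀ x ∈ Δ, -x ∈ Δ → x = 0

/-- `c` is the symbol of the analytic Toeplitz operator `T`, with absolutely summable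
coefficients. -/
structure IsSymbol (c : Fin m → Fin n → (Fin k → ℝ) → ℂ)
    (T : L2 (Fin n × ↥Δ) →L[ℂ] L2 (Fin m × ↥Δ)) : Prop where
  summable : ∀ i j, Summable fun x => ‖c i j x‖
  mem : ∀ i j x, c i j x ≠ 0 → x ∈ Δ
  rep : Rep c T

section Symbol

variable {c : Fin m → Fin n → (Fin k → ℝ) → ℂ}
  {T : L2 (Fin n × ↥Δ) →L[ℂ] L2 (Fin m × ↥Δ)}

theorem IsSymbol.wg (h : IsSymbol c T) : WG deg deg T := h.rep.wg h.summable

theorem IsSymbol.wg_adjoint (h : IsSymbol c T) : WG deg deg (ContinuousLinearMap.adjoint T) :=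
  h.rep.wg_adjoint h.summable

theorem IsSymbol.l1Bdd (h : IsSymbol c T) : L1Bdd T :=
  WG.l1Bdd fiberLE_deg h.wg_adjoint

theorem IsSymbol.l1Bdd_adjoint (h : IsSymbol c T) : L1Bdd (ContinuousLinearMap.adjoint T) :=
  WG.l1Bdd (g := deg) fiberLE_deg (by
    rw [ContinuousLinearMap.adjoint_adjoint]
    exact h.wg)

end Symbol

/-- A function whose only nonzero Bohr-Fourier coefficient is the one at zero is constant. -/
theorem eq_const_of_bohrCoeff {f : APB k} (hf : f ∈ APalg k)
    (h : ∀ lam, lam ≠ 0 → bohrCoeff k f lam = 0) (s : Fin k → ℝ) : f s = bohrCoeff k f 0 := by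
  have h1 : f = bohrCoeff k f 0 • apExp k 0 := by
    refine eq_of_bohrCoeff hf ((APalg k).smul_mem (apExp_mem 0) _) fun lam => ?_
    rw [bohrCoeff_smul (apExp_mem 0), bohrCoeff_apExp]
    by_cases hlam : lam = 0
    · rw [hlam, if_pos rfl, mul_one]
    · rw [h lam hlam, if_neg (Ne.symm hlam), mul_zero]
  conv_lhs => rw [h1]
  change bohrCoeff k f 0 * apExp k 0 s = _
  rw [apExp_zero]
  exact mul_one _

section Gram

variable {cA : Fin p → Fin m → (Fin k → ℝ) → ℂ} {cB : Fin p → Fin n → (Fin k → ℝ) → ℂ}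
  {TA : L2 (Fin m × ↥Δ) →L[ℂ] L2 (Fin p × ↥Δ)} {TB : L2 (Fin n × ↥Δ) →L[ℂ] L2 (Fin p × ↥Δ)}

theorem inner_backward (hΔ : IsCone Δ) (hA : IsSymbol cA TA) (hB : IsSymbol cB TB) {t : ℝ}
    {y : L2 (Fin p × ↥Δ)} {e V : L2 (Fin n × ↥Δ)} {U : L2 (Fin m × ↥Δ)}
    (hV : V = e + (t : ℂ) • ContinuousLinearMap.adjoint TB y)
    (hU : U = ContinuousLinearMap.adjoint TA y) (hUV : TA U = TB V) (lam : ↥Δ) :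
    inner ℂ V (wpull (backWeight hΔ.add_mem n lam) V) -
      t * inner ℂ U (wpull (backWeight hΔ.add_mem m lam) U) =
        inner ℂ V (wpull (backWeight hΔ.add_mem n lam) e) := by
  have h1 : wpull (backWeight hΔ.add_mem n lam) V = wpull (backWeight hΔ.add_mem n lam) e +
      (t : ℂ) • ContinuousLinearMap.adjoint TB (wpull (backWeight hΔ.add_mem p lam) y) := by
    rw [hV, map_add, map_smul, hB.rep.adjoint_backward hΔ.add_mem hB.mem]
  have h2 : wpull (backWeight hΔ.add_mem m lam) U =
      ContinuousLinearMap.adjoint TA (wpull (backWeight hΔ.add_mem p lam) y) := by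
    rw [hU, hA.rep.adjoint_backward hΔ.add_mem hA.mem]
  rw [h1, h2, inner_add_right, inner_smul_right, ContinuousLinearMap.adjoint_inner_right,
    ContinuousLinearMap.adjoint_inner_right, hUV, add_sub_cancel_right]

theorem backward_of_degree_zero (hΔ : IsCone Δ) {e : L2 (Fin n × ↥Δ)}
    (he : ∀ q : Fin n × ↥Δ, q.2.1 ≠ 0 → e q = 0) {lam : ↥Δ} (hlam : lam.1 ≠ 0) :
    wpull (backWeight hΔ.add_mem n lam) e = 0 := by
  ext r
  rw [wpull_backWeight]
  refine he _ fun h => hlam (hΔ.antisymm _ lam.2 ?_)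
  rw [← eq_neg_of_add_eq_zero_left h]
  exact r.2.2

/-- The Gram identity. -/
theorem sum_sq_sub_eq (hΔ : IsCone Δ) (hA : IsSymbol cA TA) (hB : IsSymbol cB TB) {t : ℝ}
    {y : L2 (Fin p × ↥Δ)} {e V : L2 (Fin n × ↥Δ)} {U : L2 (Fin m × ↥Δ)} (hV1 : S1 V) (hU1 : S1 U)
    (he : ∀ q : Fin n × ↥Δ, q.2.1 ≠ 0 → e q = 0)
    (hV : V = e + (t : ℂ) • ContinuousLinearMap.adjoint TB y)
    (hU : U = ContinuousLinearMap.adjoint TA y) (hUV : TA U = TB V) (s : Fin k → ℝ) :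
    ∑ i, ‖fn V i s‖ ^ 2 - t * ∑ i, ‖fn U i s‖ ^ 2 = (inner ℂ V e).re := by
  have hc : ∀ lam, bohrCoeff k ⇑(sqFn V + (-t : ℂ) • sqFn U) lam =
      bohrCoeff k (sqFn V) lam - t * bohrCoeff k (sqFn U) lam := fun lam => by
    rw [bohrCoeff_add (sqFn_mem hV1) ((APalg k).smul_mem (sqFn_mem hU1) _),
      bohrCoeff_smul (sqFn_mem hU1), neg_mul, ← sub_eq_add_neg]
  have hmem : ∀ lam : ↥Δ, bohrCoeff k (sqFn V) lam.1 - t * bohrCoeff k (sqFn U) lam.1 =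
      inner ℂ V (wpull (backWeight hΔ.add_mem n lam) e) := fun lam => by
    rw [bohrCoeff_sqFn_mem hΔ.add_mem hV1, bohrCoeff_sqFn_mem hΔ.add_mem hU1,
      inner_backward hΔ hA hB hV hU hUV]
  have hzero : ∀ lam ∈ Δ, lam ≠ 0 →
      bohrCoeff k (sqFn V) lam - t * bohrCoeff k (sqFn U) lam = 0 := fun lam h h0 => by
    rw [hmem ⟨lam, h⟩, backward_of_degree_zero hΔ he h0, inner_zero_right]
  have h1 := eq_const_of_bohrCoeff (add_mem (sqFn_mem hV1)
    ((APalg k).smul_mem (sqFn_mem hU1) (-t : ℂ))) (fun lam hlam => by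
      rw [hc]
      by_cases h : lam ∈ Δ
      · exact hzero lam h hlam
      by_cases h' : -lam ∈ Δ
      · have h2 := hzero _ h' (neg_ne_zero.2 hlam)
        rw [bohrCoeff_sqFn_neg hV1, bohrCoeff_sqFn_neg hU1] at h2
        have h3 := congrArg star h2
        rwa [star_sub, star_mul', star_star, star_star, star_zero, Complex.star_def,
          Complex.conj_ofReal] at h3
      · rw [bohrCoeff_sqFn_eq_zero hΔ.total hV1 h h', bohrCoeff_sqFn_eq_zero hΔ.total hU1 h h',
          mul_zero, sub_zero]) s
  have h2 : wpull (backWeight hΔ.add_mem n ⟨0, hΔ.zero_mem⟩) e = e := by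
    ext r
    rw [wpull_backWeight]
    exact congrArg e (Prod.ext rfl (Subtype.ext (add_zero r.2.1)))
  rw [hc, hmem ⟨0, hΔ.zero_mem⟩, h2] at h1
  change sqFn V s + (-t : ℂ) * sqFn U s = _ at h1
  rw [sqFn_apply, sqFn_apply] at h1
  rw [← h1, neg_mul, ← sub_eq_add_neg, ← Complex.ofReal_mul, ← Complex.ofReal_sub,
    Complex.ofReal_re]

end Gram

section Homotopy

variable {cA : Fin p → Fin m → (Fin k → ℝ) → ℂ} {cB : Fin p → Fin n → (Fin k → ℝ) → ℂ}
  {TA : L2 (Fin m × ↥Δ) →L[ℂ] L2 (Fin p × ↥Δ)} {TB : L2 (Fin n × ↥Δ) →L[ℂ] L2 (Fin p × ↥Δ)}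

/-- The defect operator `TA TA* - t TB TB*`. -/
def defect (TA : L2 (Fin m × ↥Δ) →L[ℂ] L2 (Fin p × ↥Δ))
    (TB : L2 (Fin n × ↥Δ) →L[ℂ] L2 (Fin p × ↥Δ)) (t : ℝ) :
    L2 (Fin p × ↥Δ) →L[ℂ] L2 (Fin p × ↥Δ) :=
  TA.comp (ContinuousLinearMap.adjoint TA) - (t : ℂ) • TB.comp (ContinuousLinearMap.adjoint TB)

/-- Standing assumptions on the defect operator with parameter `τ`. -/
structure Setup (cA : Fin p → Fin m → (Fin k → ℝ) → ℂ) (cB : Fin p → Fin n → (Fin k → ℝ) → ℂ)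
    (TA : L2 (Fin m × ↥Δ) →L[ℂ] L2 (Fin p × ↥Δ)) (TB : L2 (Fin n × ↥Δ) →L[ℂ] L2 (Fin p × ↥Δ))
    (τ : ℝ) : Prop where
  cone : IsCone Δ
  symbA : IsSymbol cA TA
  symbB : IsSymbol cB TB
  pos : (defect TA TB τ).IsPositive
  unit : IsUnit (defect TA TB τ)

theorem defect_sub (TA : L2 (Fin m × ↥Δ) →L[ℂ] L2 (Fin p × ↥Δ))
    (TB : L2 (Fin n × ↥Δ) →L[ℂ] L2 (Fin p × ↥Δ)) (t s : ℝ) :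
    defect TA TB t - defect TA TB s =
      ((s - t : ℝ) : ℂ) • TB.comp (ContinuousLinearMap.adjoint TB) := by
  rw [defect, defect, Complex.ofReal_sub, sub_smul]
  abel

variable {τ t : ℝ}

theorem Setup.le (_h : Setup cA cB TA TB τ) (ht : t ≤ τ) : defect TA TB τ ≤ defect TA TB t := by
  rw [ContinuousLinearMap.le_def, defect_sub]
  exact (ContinuousLinearMap.isPositive_self_comp_adjoint TB).smul_of_nonneg
    (by exact_mod_cast sub_nonneg.2 ht)

theorem Setup.isPositive (h : Setup cA cB TA TB τ) (ht : t ≤ τ) :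
    (defect TA TB t).IsPositive := by
  have h1 := (ContinuousLinearMap.nonneg_iff_isPositive _).2 h.pos
  exact (ContinuousLinearMap.nonneg_iff_isPositive _).1 (h1.trans (h.le ht))

theorem Setup.isUnit (h : Setup cA cB TA TB τ) (ht : t ≤ τ) : IsUnit (defect TA TB t) :=
  CStarAlgebra.isUnit_of_le _ (h.le ht)
    ⟨(ContinuousLinearMap.nonneg_iff_isPositive _).2 h.pos, h.unit⟩

/-- The inverse of the defect operator. -/
def dinv (TA : L2 (Fin m × ↥Δ) →L[ℂ] L2 (Fin p × ↥Δ))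
    (TB : L2 (Fin n × ↥Δ) →L[ℂ] L2 (Fin p × ↥Δ)) (t : ℝ) :
    L2 (Fin p × ↥Δ) →L[ℂ] L2 (Fin p × ↥Δ) := Ring.inverse (defect TA TB t)

theorem Setup.defect_comp_dinv (h : Setup cA cB TA TB τ) (ht : t ≤ τ) :
    (defect TA TB t).comp (dinv TA TB t) = ContinuousLinearMap.id ℂ _ :=
  Ring.mul_inverse_cancel _ (h.isUnit ht)

theorem Setup.dinv_comp_defect (h : Setup cA cB TA TB τ) (ht : t ≤ τ) :
    (dinv TA TB t).comp (defect TA TB t) = ContinuousLinearMap.id ℂ _ :=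
  Ring.inverse_mul_cancel _ (h.isUnit ht)

theorem Setup.l1Bdd_dinv (h : Setup cA cB TA TB τ) (ht : t ≤ τ) : L1Bdd (dinv TA TB t) := by
  refine WG.l1Bdd_inverse fiberLE_deg ?_ (h.defect_comp_dinv ht) (h.dinv_comp_defect ht)
  rw [(h.isPositive ht).isSelfAdjoint.adjoint_eq]
  rw [defect, sub_eq_add_neg, ← neg_smul]
  exact (h.symbA.wg.comp h.symbA.wg_adjoint).add ((h.symbB.wg.comp h.symbB.wg_adjoint).smul _)

/-- The auxiliary vector `y`. -/
def yvec (TA : L2 (Fin m × ↥Δ) →L[ℂ] L2 (Fin p × ↥Δ))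
    (TB : L2 (Fin n × ↥Δ) →L[ℂ] L2 (Fin p × ↥Δ)) (t : ℝ) :
    L2 (Fin n × ↥Δ) →L[ℂ] L2 (Fin p × ↥Δ) := (dinv TA TB t).comp TB

/-- The numerator column attached to a constant column. -/
def uvec (TA : L2 (Fin m × ↥Δ) →L[ℂ] L2 (Fin p × ↥Δ))
    (TB : L2 (Fin n × ↥Δ) →L[ℂ] L2 (Fin p × ↥Δ)) (t : ℝ) :
    L2 (Fin n × ↥Δ) →L[ℂ] L2 (Fin m × ↥Δ) := (ContinuousLinearMap.adjoint TA).comp (yvec TA TB t)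

/-- The denominator column attached to a constant column. -/
def vvec (TA : L2 (Fin m × ↥Δ) →L[ℂ] L2 (Fin p × ↥Δ))
    (TB : L2 (Fin n × ↥Δ) →L[ℂ] L2 (Fin p × ↥Δ)) (t : ℝ) :
    L2 (Fin n × ↥Δ) →L[ℂ] L2 (Fin n × ↥Δ) :=
  ContinuousLinearMap.id ℂ _ + (t : ℂ) • (ContinuousLinearMap.adjoint TB).comp (yvec TA TB t)

theorem vvec_apply (TA : L2 (Fin m × ↥Δ) →L[ℂ] L2 (Fin p × ↥Δ))
    (TB : L2 (Fin n × ↥Δ) →L[ℂ] L2 (Fin p × ↥Δ)) (t : ℝ) (e : L2 (Fin n × ↥Δ)) :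
    vvec TA TB t e = e + (t : ℂ) • ContinuousLinearMap.adjoint TB (yvec TA TB t e) := rfl

theorem Setup.defect_yvec (h : Setup cA cB TA TB τ) (ht : t ≤ τ) (e : L2 (Fin n × ↥Δ)) :
    defect TA TB t (yvec TA TB t e) = TB e :=
  congrArg (fun T => T (TB e)) (h.defect_comp_dinv ht)

theorem Setup.s1_yvec (h : Setup cA cB TA TB τ) (ht : t ≤ τ) {e : L2 (Fin n × ↥Δ)} (he : S1 e) :
    S1 (yvec TA TB t e) := (h.l1Bdd_dinv ht).s1 (h.symbB.l1Bdd.s1 he)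

theorem Setup.s1_uvec (h : Setup cA cB TA TB τ) (ht : t ≤ τ) {e : L2 (Fin n × ↥Δ)} (he : S1 e) :
    S1 (uvec TA TB t e) := h.symbA.l1Bdd_adjoint.s1 (h.s1_yvec ht he)

theorem Setup.s1_vvec (h : Setup cA cB TA TB τ) (ht : t ≤ τ) {e : L2 (Fin n × ↥Δ)} (he : S1 e) :
    S1 (vvec TA TB t e) := he.add ((h.symbB.l1Bdd_adjoint.s1 (h.s1_yvec ht he)).smul _)

theorem Setup.apply_uvec (h : Setup cA cB TA TB τ) (ht : t ≤ τ) (e : L2 (Fin n × ↥Δ)) :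
    TA (uvec TA TB t e) = TB (vvec TA TB t e) := by
  rw [vvec_apply, map_add, map_smul, ← h.defect_yvec ht e]
  exact (sub_add_cancel _ _).symm

theorem Setup.norm_sq_le (h : Setup cA cB TA TB τ) (ht : t ≤ τ) (ht0 : 0 ≤ t)
    {e : L2 (Fin n × ↥Δ)} (he1 : S1 e) (he : ∀ q : Fin n × ↥Δ, q.2.1 ≠ 0 → e q = 0)
    (s : Fin k → ℝ) : ‖e‖ ^ 2 + t * ∑ i, ‖fn (uvec TA TB t e) i s‖ ^ 2 ≤
      ∑ i, ‖fn (vvec TA TB t e) i s‖ ^ 2 := by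
  have h1 := sum_sq_sub_eq h.cone h.symbA h.symbB (h.s1_vvec ht he1) (h.s1_uvec ht he1) he
    (vvec_apply TA TB t e) rfl (h.apply_uvec ht e) s
  have h2 : (inner ℂ (vvec TA TB t e) e).re =
      ‖e‖ ^ 2 + t * (inner ℂ (yvec TA TB t e) (defect TA TB t (yvec TA TB t e))).re := by
    rw [h.defect_yvec ht, vvec_apply, inner_add_left, inner_smul_left,
      ContinuousLinearMap.adjoint_inner_left, Complex.add_re, Complex.conj_ofReal,
      Complex.re_ofReal_mul]
    congr 1
    exact inner_self_eq_norm_sq (𝕜 := ℂ) e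
  have h3 := mul_nonneg ht0 ((h.isPositive ht).re_inner_nonneg_right (yvec TA TB t e))
  change 0 ≤ t * (inner ℂ (yvec TA TB t e) (defect TA TB t (yvec TA TB t e))).re at h3
  linarith

end Homotopy

end ToeplitzCorona

namespace ToeplitzCorona

open scoped Topology InnerProduct ComplexOrder

variable {k p m n : ℕ} {Δ : Set (Fin k → ℝ)}

/-- The `j`-th constant basis column. -/
def constBas (hΔ : IsCone Δ) (j : Fin n) : L2 (Fin n × ↥Δ) := bas (j, ⟨0, hΔ.zero_mem⟩)

/-- The constant column with entries `v`. -/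
def constCol (hΔ : IsCone Δ) (v : Fin n → ℂ) : L2 (Fin n × ↥Δ) := ∑ j, v j • constBas hΔ j

theorem s1_constBas (hΔ : IsCone Δ) (j : Fin n) : S1 (constBas hΔ j) := summable_bas _

theorem s1_constCol (hΔ : IsCone Δ) (v : Fin n → ℂ) : S1 (constCol hΔ v) :=
  S1.sum _ fun j => (s1_constBas hΔ j).smul _

theorem constCol_apply (hΔ : IsCone Δ) (v : Fin n → ℂ) (q : Fin n × ↥Δ) :
    constCol hΔ v q = ∑ j, v j * constBas hΔ j q := by
  change lp.evalCLM ℂ (fun _ : Fin n × ↥Δ => ℂ) 2 q (constCol hΔ v) = _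
  rw [constCol, map_sum]
  rfl

theorem constCol_of_ne (hΔ : IsCone Δ) (v : Fin n → ℂ) {q : Fin n × ↥Δ} (hq : q.2.1 ≠ 0) :
    constCol hΔ v q = 0 := by
  rw [constCol_apply]
  refine Finset.sum_eq_zero fun j _ => ?_
  rw [constBas, bas_of_ne, mul_zero]
  rintro rfl
  exact hq rfl

theorem constCol_zero (hΔ : IsCone Δ) (v : Fin n → ℂ) (j : Fin n) :
    constCol hΔ v (j, ⟨0, hΔ.zero_mem⟩) = v j := by
  rw [constCol_apply, Finset.sum_eq_single j, constBas, bas_self, mul_one]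
  · intro b _ hb
    rw [constBas, bas_of_ne, mul_zero]
    exact fun h => hb (congrArg Prod.fst h).symm
  · exact fun h => absurd (Finset.mem_univ j) h

theorem sum_sq_le_norm_constCol (hΔ : IsCone Δ) (v : Fin n → ℂ) :
    ∑ j, ‖v j‖ ^ 2 ≤ ‖constCol hΔ v‖ ^ 2 := by
  have h := sum_norm_sq_le (constCol hΔ v)
    (Finset.univ.map ⟨fun j => (j, ⟨0, hΔ.zero_mem⟩), fun _ _ h => congrArg Prod.fst h⟩)
  rw [Finset.sum_map] at h
  refine (Finset.sum_congr rfl fun j _ => ?_).trans_le h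
  exact congrArg (fun z => ‖z‖ ^ 2) (constCol_zero hΔ v j).symm

theorem fn_constBas (hΔ : IsCone Δ) (i j : Fin n) :
    fn (constBas hΔ j) i = if i = j then 1 else 0 := by
  have h1 : fn (constBas hΔ j) i = (if i = j then (1 : ℂ) else 0) • apExp k 0 := by
    refine eq_of_bohrCoeff (APWmem_fn (s1_constBas hΔ j) i).1.1
      ((APalg k).smul_mem (apExp_mem 0) _) fun lam => ?_
    rw [bohrCoeff_fn (s1_constBas hΔ j), bohrCoeff_smul (apExp_mem 0), bohrCoeff_apExp]
    by_cases hlam : lam = 0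
    · subst hlam
      rw [ext_mem _ i ⟨0, hΔ.zero_mem⟩, if_pos rfl, mul_one]
      by_cases hij : i = j
      · rw [hij, if_pos rfl]
        exact bas_self _
      · rw [if_neg hij]
        exact bas_of_ne fun h => hij (congrArg Prod.fst h)
    · rw [if_neg (Ne.symm hlam), mul_zero]
      by_cases hmem : lam ∈ Δ
      · rw [ext_mem _ i ⟨lam, hmem⟩]
        exact bas_of_ne fun h => hlam (congrArg (fun q => q.2.1) h)
      · exact ext_of_notMem _ _ hmem
  rw [h1, apExp_zero]
  split_ifs
  · rw [one_smul]
  · rw [zero_smul]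

theorem fn_apply_constCol (hΔ : IsCone Δ) {T : L2 (Fin n × ↥Δ) →L[ℂ] L2 (Fin m × ↥Δ)}
    (hT : ∀ j, S1 (T (constBas hΔ j))) (v : Fin n → ℂ) (i : Fin m) (s : Fin k → ℝ) :
    fn (T (constCol hΔ v)) i s = ∑ j, fn (T (constBas hΔ j)) i s * v j := by
  have h1 : T (constCol hΔ v) = ∑ j, v j • T (constBas hΔ j) := by
    rw [constCol, map_sum]
    exact Finset.sum_congr rfl fun j _ => map_smul _ _ _
  rw [h1, fn_sum_smul _ _ hT, BoundedContinuousFunction.coe_sum, Finset.sum_apply]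
  exact Finset.sum_congr rfl fun j _ => mul_comm _ _

section Columns

variable {v w : Fin n → L2 (Fin m × ↥Δ)} {T T' : L2 (Fin n × ↥Δ) →L[ℂ] L2 (Fin m × ↥Δ)}

theorem exists_isSymbol_ext (hv : ∀ j, S1 (v j)) :
    ∃ T : L2 (Fin n × ↥Δ) →L[ℂ] L2 (Fin m × ↥Δ), IsSymbol (fun i j => ext (v j) i) T := by
  have hs : ∀ (i : Fin m) (j : Fin n), Summable fun x => ‖ext (v j) i x‖ := fun i j =>
    (hasSum_norm_ext (hv j) i).summable
  obtain ⟨T, hT, -⟩ := exists_rep Δ (c := fun i j => ext (v j) i) hs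
  exact ⟨T, hs, fun _ _ _ => mem_of_ext_ne, hT⟩

theorem IsSymbol.sum_mul_fn (hΔ : IsCone Δ) (hv : ∀ j, S1 (v j))
    (hT : IsSymbol (fun i j => ext (v j) i) T) {x : L2 (Fin n × ↥Δ)} (hx : S1 x) (i : Fin m) :
    ∑ j, fn (v j) i * fn x j = fn (T x) i := by
  refine Rep.sum_mul_fn hΔ.add_mem (F := fun i j => fn (v j) i) (fun i j => APWmem_fn (hv j) i)
    (fun q r => ?_) hx (hT.l1Bdd.s1 hx) i
  exact (hT.rep q r).trans (bohrCoeff_fn (hv q.1) r.1 _).symm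

theorem IsSymbol.norm_sub_le (hv : ∀ j, S1 (v j)) (hw : ∀ j, S1 (w j))
    (hT : IsSymbol (fun i j => ext (v j) i) T) (hT' : IsSymbol (fun i j => ext (w j) i) T') :
    ‖T - T'‖ ≤ ∑ j, n1 (v j - w j) := by
  have hrep := hT.rep.sub hT'.rep
  simp only [← ext_sub] at hrep
  refine (hrep.norm_le fun i j =>
    (hasSum_norm_ext ((hv j).sub (hw j)) i).summable).trans_eq ?_
  rw [Finset.sum_comm]
  exact Finset.sum_congr rfl fun j _ => sum_tsum_norm_ext ((hv j).sub (hw j))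

theorem IsSymbol.eq_one (hΔ : IsCone Δ) {T : L2 (Fin n × ↥Δ) →L[ℂ] L2 (Fin n × ↥Δ)}
    (hT : IsSymbol (fun i j => ext (constBas hΔ j) i) T) : T = 1 := by
  refine clm_ext_bas fun q r => ?_
  refine (hT.rep q r).trans ?_
  change ext (constBas hΔ q.1) r.1 (deg r - deg q) = bas q r
  by_cases h : r = q
  · rw [h, bas_self, sub_self, ext_mem _ _ ⟨0, hΔ.zero_mem⟩]
    exact bas_self _
  · rw [bas_of_ne h]
    by_cases hmem : deg r - deg q ∈ Δ
    · rw [ext_mem _ _ ⟨_, hmem⟩]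
      refine bas_of_ne fun h1 => h ?_
      have h2 : r.1 = q.1 := congrArg (fun q => q.1) h1
      have h3 : deg r - deg q = 0 := congrArg (fun q => q.2.1) h1
      exact Prod.ext h2 (Subtype.ext (sub_eq_zero.1 h3))
    · exact ext_of_notMem _ _ hmem

end Columns

section Invertible

variable {cA : Fin p → Fin m → (Fin k → ℝ) → ℂ} {cB : Fin p → Fin n → (Fin k → ℝ) → ℂ}
  {TA : L2 (Fin m × ↥Δ) →L[ℂ] L2 (Fin p × ↥Δ)} {TB : L2 (Fin n × ↥Δ) →L[ℂ] L2 (Fin p × ↥Δ)}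
  {τ t : ℝ}

theorem Setup.sum_sq_le (h : Setup cA cB TA TB τ) (ht : t ≤ τ) (ht0 : 0 ≤ t) (v : Fin n → ℂ)
    (s : Fin k → ℝ) : ∑ j, ‖v j‖ ^ 2 +
      t * ∑ i, ‖∑ j, fn (uvec TA TB t (constBas h.cone j)) i s * v j‖ ^ 2 ≤
      ∑ i, ‖∑ j, fn (vvec TA TB t (constBas h.cone j)) i s * v j‖ ^ 2 := by
  have h1 := h.norm_sq_le ht ht0 (s1_constCol h.cone v) (fun q => constCol_of_ne h.cone v) s
  simp only [fn_apply_constCol h.cone (fun j => h.s1_uvec ht (s1_constBas h.cone j)),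
    fn_apply_constCol h.cone (fun j => h.s1_vvec ht (s1_constBas h.cone j))] at h1
  linarith [sum_sq_le_norm_constCol h.cone v]

theorem Setup.norm_le (h : Setup cA cB TA TB τ) (ht : t ≤ τ) (ht0 : 0 ≤ t)
    {T : L2 (Fin n × ↥Δ) →L[ℂ] L2 (Fin n × ↥Δ)}
    (hT : IsSymbol (fun i j => ext (vvec TA TB t (constBas h.cone j)) i) T)
    (x : L2 (Fin n × ↥Δ)) : ‖x‖ ≤ ‖T x‖ := by
  have h1 : ∀ x : L2 (Fin n × ↥Δ), S1 x → ‖x‖ ≤ ‖T x‖ := fun x hx => by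
    refine norm_le_of_pointwise h.cone.add_mem h.cone.zero_mem hx (hT.l1Bdd.s1 hx) fun s => ?_
    have h2 := h.sum_sq_le ht ht0 (fun j => fn x j s) s
    have h3 : ∀ i, fn (T x) i s =
        ∑ j, fn (vvec TA TB t (constBas h.cone j)) i s * fn x j s := fun i => by
      rw [← hT.sum_mul_fn h.cone (fun j => h.s1_vvec ht (s1_constBas h.cone j)) hx i,
        BoundedContinuousFunction.coe_sum, Finset.sum_apply]
      rfl
    simp only [h3]
    refine le_trans (le_add_of_nonneg_right ?_) h2
    exact mul_nonneg ht0 (Finset.sum_nonneg fun _ _ => sq_nonneg _)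
  have hcl : IsClosed {x : L2 (Fin n × ↥Δ) | ‖x‖ ≤ ‖T x‖} :=
    isClosed_le continuous_norm T.continuous.norm
  exact hcl.mem_of_tendsto (hasSum_bas x) (Eventually.of_forall fun s =>
    h1 _ (S1.sum s fun q => S1.smul (summable_bas q) _))

theorem isUnit_of_norm_sub_lt {E : Type*} [NormedAddCommGroup E] [NormedSpace ℂ E]
    [CompleteSpace E] {X Y : E →L[ℂ] E} (hX : IsUnit X) (hb : ∀ x, ‖x‖ ≤ ‖X x‖)
    (hXY : ‖X - Y‖ < 1) : IsUnit Y := by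
  have h1 : ‖Ring.inverse X‖ ≤ 1 := by
    refine ContinuousLinearMap.opNorm_le_bound _ zero_le_one fun x => ?_
    refine (hb _).trans_eq ?_
    have h2 := congrArg (fun T => T x) (Ring.mul_inverse_cancel X hX)
    rw [one_mul]
    exact congrArg norm h2
  have h2 : ‖Ring.inverse X * (X - Y)‖ < 1 :=
    (norm_mul_le _ _).trans_lt ((mul_le_of_le_one_left (norm_nonneg _) h1).trans_lt hXY)
  have h3 : Y = X * (1 - Ring.inverse X * (X - Y)) := by
    rw [mul_sub, mul_one, ← mul_assoc, Ring.mul_inverse_cancel X hX, one_mul, sub_sub_cancel]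
  rw [h3]
  exact hX.mul (isUnit_one_sub_of_norm_lt_one h2)

theorem Setup.yvec_sub (h : Setup cA cB TA TB τ) {s : ℝ} (ht : t ≤ τ) (hs : s ≤ τ)
    (e : L2 (Fin n × ↥Δ)) : yvec TA TB t e - yvec TA TB s e = ((t - s : ℝ) : ℂ) •
      dinv TA TB s (TB (ContinuousLinearMap.adjoint TB (yvec TA TB t e))) := by
  have h1 := congrArg (fun T => T (yvec TA TB t e)) (h.dinv_comp_defect hs)
  have h2 := congrArg (fun T => dinv TA TB s (T (yvec TA TB t e))) (defect_sub TA TB s t)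
  change dinv TA TB s (defect TA TB s (yvec TA TB t e) - defect TA TB t (yvec TA TB t e)) =
    dinv TA TB s (((t - s : ℝ) : ℂ) • _) at h2
  rw [map_sub, h.defect_yvec ht, map_smul] at h2
  change dinv TA TB s (defect TA TB s (yvec TA TB t e)) = yvec TA TB t e at h1
  rw [h1] at h2
  exact h2

theorem L1Bdd.comp {I I' I'' : Type} {T : L2 I →L[ℂ] L2 I'} {T' : L2 I' →L[ℂ] L2 I''}
    (hT' : L1Bdd T') (hT : L1Bdd T) : L1Bdd (T'.comp T) := by
  obtain ⟨C', hC', h'⟩ := hT'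
  obtain ⟨C, hC, h⟩ := hT
  refine ⟨C' * C, mul_nonneg hC' hC, fun x hx => ⟨(h' _ (h x hx).1).1, ?_⟩⟩
  rw [mul_assoc]
  exact ((h' _ (h x hx).1).2).trans (mul_le_mul_of_nonneg_left (h x hx).2 hC')

theorem Setup.exists_n1_yvec_sub_le (h : Setup cA cB TA TB τ) {s : ℝ} (hs : s ≤ τ)
    {e : L2 (Fin n × ↥Δ)} (he : S1 e) : ∃ M : ℝ, 0 ≤ M ∧ ∀ t ≤ τ, |t - s| * M ≤ 1 →
      n1 (yvec TA TB t e - yvec TA TB s e) ≤ |t - s| * M := by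
  obtain ⟨C, hC, hb⟩ := (h.l1Bdd_dinv hs).comp (h.symbB.l1Bdd.comp h.symbB.l1Bdd_adjoint)
  have hb0 := n1_nonneg (yvec TA TB s e)
  refine ⟨2 * C * (1 + n1 (yvec TA TB s e)), by positivity, fun t ht htM => ?_⟩
  have hd := (h.s1_yvec ht he).sub (h.s1_yvec hs he)
  have h1 : n1 (yvec TA TB t e - yvec TA TB s e) ≤ |t - s| * (C * n1 (yvec TA TB t e)) := by
    conv_lhs => rw [h.yvec_sub ht hs, n1_smul, Complex.norm_real]
    exact mul_le_mul_of_nonneg_left (hb _ (h.s1_yvec ht he)).2 (abs_nonneg _)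
  have h2 := n1_add_le hd (h.s1_yvec hs he)
  rw [sub_add_cancel] at h2
  have h3 : 0 ≤ |t - s| * C := mul_nonneg (abs_nonneg _) hC
  have h4 := mul_le_mul_of_nonneg_left h2 h3
  have h5 : |t - s| * C ≤ 1 / 2 := by nlinarith [mul_nonneg h3 hb0]
  have h6 := mul_le_mul_of_nonneg_right h5 (n1_nonneg (yvec TA TB t e - yvec TA TB s e))
  nlinarith

theorem Setup.exists_n1_vvec_sub_le (h : Setup cA cB TA TB τ) {s : ℝ} (hs : s ≤ τ)
    {e : L2 (Fin n × ↥Δ)} (he : S1 e) : ∃ M : ℝ, 0 ≤ M ∧ ∀ t ≤ τ, 0 ≤ t → |t - s| * M ≤ 1 →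
      n1 (vvec TA TB t e - vvec TA TB s e) ≤ |t - s| * M := by
  obtain ⟨M, hM, hy⟩ := h.exists_n1_yvec_sub_le hs he
  obtain ⟨C, hC, hb⟩ := h.symbB.l1Bdd_adjoint
  have hb0 := n1_nonneg (yvec TA TB s e)
  have hN : 0 ≤ C * (|τ| * M + n1 (yvec TA TB s e)) := by positivity
  refine ⟨M + C * (|τ| * M + n1 (yvec TA TB s e)), by positivity, fun t ht ht0 htM => ?_⟩
  have hd := (h.s1_yvec ht he).sub (h.s1_yvec hs he)
  have h0 := abs_nonneg (t - s)
  have h1 := hy t ht (by nlinarith [mul_nonneg h0 hN])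
  have h2 : vvec TA TB t e - vvec TA TB s e = ContinuousLinearMap.adjoint TB
      ((t : ℂ) • (yvec TA TB t e - yvec TA TB s e) + ((t - s : ℝ) : ℂ) • yvec TA TB s e) := by
    rw [vvec_apply, vvec_apply, add_sub_add_left_eq_sub, map_add, map_smul, map_smul, map_sub,
      Complex.ofReal_sub]
    module
  have h3 : n1 ((t : ℂ) • (yvec TA TB t e - yvec TA TB s e) +
      ((t - s : ℝ) : ℂ) • yvec TA TB s e) ≤ |t - s| * (|τ| * M + n1 (yvec TA TB s e)) := by
    refine (n1_add_le (hd.smul _) ((h.s1_yvec hs he).smul _)).trans ?_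
    rw [n1_smul, n1_smul, Complex.norm_real, Complex.norm_real, Real.norm_eq_abs,
      Real.norm_eq_abs, abs_of_nonneg ht0, abs_of_nonneg (ht0.trans ht)]
    nlinarith [mul_le_mul ht h1 (n1_nonneg _) (ht0.trans ht)]
  rw [h2]
  have h4 := (hb _ ((hd.smul (t : ℂ)).add ((h.s1_yvec hs he).smul ((t - s : ℝ) : ℂ)))).2
  change n1 _ ≤ C * n1 _ at h4
  have h5 := mul_le_mul_of_nonneg_left h3 hC
  nlinarith [mul_nonneg h0 hM]

theorem Setup.isUnit_of_isSymbol (h : Setup cA cB TA TB τ) (hτ : 0 ≤ τ)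
    {T : L2 (Fin n × ↥Δ) →L[ℂ] L2 (Fin n × ↥Δ)}
    (hT : IsSymbol (fun i j => ext (vvec TA TB τ (constBas h.cone j)) i) T) : IsUnit T := by
  have hv : ∀ (t : Set.Icc 0 τ) (j : Fin n), S1 (vvec TA TB t.1 (constBas h.cone j)) :=
    fun t j => h.s1_vvec t.2.2 (s1_constBas h.cone j)
  choose X hX using fun t => exists_isSymbol_ext (hv t)
  have hb : ∀ t x, ‖x‖ ≤ ‖X t x‖ := fun t => h.norm_le t.2.2 t.2.1 (hX t)
  have hloc : IsLocallyConstant fun t => IsUnit (X t) := by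
    refine (IsLocallyConstant.iff_eventually_eq _).2 fun s => ?_
    choose M hM hn using fun j : Fin n => h.exists_n1_vvec_sub_le s.2.2 (s1_constBas h.cone j)
    have hpos : 0 < 1 + ∑ j, M j :=
      add_pos_of_pos_of_nonneg one_pos (Finset.sum_nonneg fun j _ => hM j)
    filter_upwards [Metric.ball_mem_nhds s (inv_pos.2 hpos)] with t ht
    have h1 : |t.1 - s.1| * (1 + ∑ j, M j) < 1 := by
      rw [← lt_inv_mul_iff₀' hpos, mul_one]
      exact ht
    have h0 := abs_nonneg (t.1 - s.1)
    have h2 : ‖X t - X s‖ < 1 := by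
      rcases h0.eq_or_lt with h3 | h3
      · have h4 : t = s := Subtype.ext (sub_eq_zero.1 (abs_eq_zero.1 h3.symm))
        rw [h4, sub_self, norm_zero]
        exact one_pos
      refine ((hX t).norm_sub_le (hv t) (hv s) (hX s)).trans_lt ?_
      calc ∑ j, n1 (vvec TA TB t.1 (constBas h.cone j) - vvec TA TB s.1 (constBas h.cone j))
          ≤ ∑ j, |t.1 - s.1| * M j := Finset.sum_le_sum fun j _ => hn j t.1 t.2.2 t.2.1 (by
            have h5 := Finset.single_le_sum (fun j _ => hM j) (Finset.mem_univ j)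
            nlinarith)
        _ = |t.1 - s.1| * ∑ j, M j := (Finset.mul_sum _ _ _).symm
        _ < 1 := by nlinarith
    exact propext ⟨fun hu => isUnit_of_norm_sub_lt hu (hb t) h2,
      fun hu => isUnit_of_norm_sub_lt hu (hb s) (by rwa [norm_sub_rev])⟩
  have hpre : PreconnectedSpace (Set.Icc 0 τ) :=
    isPreconnected_iff_preconnectedSpace.1 isPreconnected_Icc
  have h0 : X ⟨0, le_rfl, hτ⟩ = 1 := by
    refine IsSymbol.eq_one h.cone ?_
    have h1 : ∀ j, vvec TA TB 0 (constBas h.cone j) = constBas h.cone j := fun j => by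
      rw [vvec_apply, Complex.ofReal_zero, zero_smul, add_zero]
    simpa only [h1] using hX ⟨0, le_rfl, hτ⟩
  have h2 := hloc.apply_eq_of_preconnectedSpace ⟨0, le_rfl, hτ⟩ ⟨τ, hτ, le_rfl⟩
  rw [hT.rep.unique (hX ⟨τ, hτ, le_rfl⟩).rep]
  refine h2.mp ?_
  rw [h0]
  exact isUnit_one

end Invertible

end ToeplitzCorona

namespace ToeplitzCorona

open scoped Topology InnerProduct ComplexOrder

variable {k p m n : ℕ} {Δ : Set (Fin k → ℝ)}

theorem sum_apply_mul {ι κ : Type*} [Fintype ι] [Fintype κ] (f : ι → APB k) (g : ι → κ → APB k)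
    (v : κ → ℂ) (s : Fin k → ℝ) :
    ∑ j, (∑ l, f l * g l j : APB k) s * v j = ∑ l, f l s * ∑ j, g l j s * v j := by
  simp only [BoundedContinuousFunction.coe_sum, Finset.sum_apply, BoundedContinuousFunction.coe_mul,
    Pi.mul_apply, Finset.sum_mul, Finset.mul_sum, mul_assoc]
  exact Finset.sum_comm

/-- The corona problem `A F = B` is solvable with a bound on `F` as soon as the defect operator
is positive and invertible. -/
theorem Setup.exists_solution {A : Fin p → Fin m → APB k} {B : Fin p → Fin n → APB k}
    (hA : ∀ i j, APWmem k Δ (A i j)) (hB : ∀ i j, APWmem k Δ (B i j))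
    {TA : L2 (Fin m × ↥Δ) →L[ℂ] L2 (Fin p × ↥Δ)} {TB : L2 (Fin n × ↥Δ) →L[ℂ] L2 (Fin p × ↥Δ)}
    {τ : ℝ} (hτ : 0 ≤ τ) (h : Setup (fun i j => bohrCoeff k (A i j))
      (fun i j => bohrCoeff k (B i j)) TA TB τ) :
    ∃ F : Fin m → Fin n → APB k, (∀ i j, APWmem k Δ (F i j)) ∧
      (∀ (s : Fin k → ℝ) (v : Fin n → ℂ),
        τ * ∑ i, ‖∑ j, F i j s * v j‖ ^ 2 ≤ ∑ j, ‖v j‖ ^ 2) ∧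
      ∀ i j, ∑ l, A i l * F l j = B i j := by
  have hU : ∀ l, S1 (uvec TA TB τ (constBas h.cone l)) := fun l =>
    h.s1_uvec le_rfl (s1_constBas h.cone l)
  have hV : ∀ l, S1 (vvec TA TB τ (constBas h.cone l)) := fun l =>
    h.s1_vvec le_rfl (s1_constBas h.cone l)
  obtain ⟨T, hT⟩ := exists_isSymbol_ext hV
  have hu := h.isUnit_of_isSymbol hτ hT
  have hZ1 : L1Bdd (Ring.inverse T) := WG.l1Bdd_inverse fiberLE_deg hT.wg_adjoint
    (Ring.mul_inverse_cancel T hu) (Ring.inverse_mul_cancel T hu)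
  have hZ : ∀ j, S1 (Ring.inverse T (constBas h.cone j)) := fun j =>
    hZ1.s1 (s1_constBas h.cone j)
  have hVZ : ∀ i j, ∑ l, fn (vvec TA TB τ (constBas h.cone l)) i *
      fn (Ring.inverse T (constBas h.cone j)) l = if i = j then 1 else 0 := fun i j => by
    rw [hT.sum_mul_fn h.cone hV (hZ j) i, ← fn_constBas h.cone i j]
    exact congrArg (fun X => fn (X (constBas h.cone j)) i) (Ring.mul_inverse_cancel T hu)
  have hAU : ∀ i l, ∑ r, A i r * fn (uvec TA TB τ (constBas h.cone l)) r =
      ∑ c, B i c * fn (vvec TA TB τ (constBas h.cone l)) c := fun i l => by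
    rw [h.symbA.rep.sum_mul_fn h.cone.add_mem hA (hU l) (h.symbA.l1Bdd.s1 (hU l)),
      h.symbB.rep.sum_mul_fn h.cone.add_mem hB (hV l) (h.symbB.l1Bdd.s1 (hV l)),
      h.apply_uvec le_rfl]
  refine ⟨fun i j => ∑ l, fn (uvec TA TB τ (constBas h.cone l)) i *
      fn (Ring.inverse T (constBas h.cone j)) l, fun i j => ?_, fun s v => ?_, fun i j => ?_⟩
  · exact APWmem_sum _ fun l _ =>
      APWmem_mul h.cone.add_mem (APWmem_fn (hU l) i) (APWmem_fn (hZ j) l)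
  · have h1 := h.sum_sq_le le_rfl hτ
      (fun l => ∑ j, fn (Ring.inverse T (constBas h.cone j)) l s * v j) s
    simp only [← sum_apply_mul (fun l => fn (vvec TA TB τ (constBas h.cone l)) _)
      (fun l j => fn (Ring.inverse T (constBas h.cone j)) l) v s, hVZ] at h1
    have h2 : ∀ i : Fin n, ∑ j, (if i = j then (1 : APB k) else 0) s * v j = v i := fun i => by
      rw [Finset.sum_eq_single i]
      · rw [if_pos rfl]
        exact one_mul _
      · intro j _ hj
        rw [if_neg (Ne.symm hj)]
        exact zero_mul _
      · exact fun hi => absurd (Finset.mem_univ i) hi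
    simp only [h2] at h1
    simp only [sum_apply_mul (fun l => fn (uvec TA TB τ (constBas h.cone l)) _)
      (fun l j => fn (Ring.inverse T (constBas h.cone j)) l) v s]
    exact (le_add_of_nonneg_left (Finset.sum_nonneg fun _ _ => sq_nonneg _)).trans h1
  · calc ∑ r, A i r * ∑ l, fn (uvec TA TB τ (constBas h.cone l)) r *
          fn (Ring.inverse T (constBas h.cone j)) l
        = ∑ l, (∑ r, A i r * fn (uvec TA TB τ (constBas h.cone l)) r) *
          fn (Ring.inverse T (constBas h.cone j)) l := by
          simp only [Finset.mul_sum, Finset.sum_mul, mul_assoc]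
          exact Finset.sum_comm
      _ = ∑ c, B i c * ∑ l, fn (vvec TA TB τ (constBas h.cone l)) c *
          fn (Ring.inverse T (constBas h.cone j)) l := by
          simp only [hAU, Finset.mul_sum, Finset.sum_mul, mul_assoc]
          exact Finset.sum_comm
      _ = B i j := by
          simp only [hVZ, mul_ite, mul_one, mul_zero, Finset.sum_ite_eq', Finset.mem_univ, if_true]

theorem isCone_inter {S : Set (Fin k → ℝ)} (hS : IsHalfspace k S)
    (Lam : AddSubgroup (Fin k → ℝ)) : IsCone (S ∩ ↑Lam) := by
  have h0 : (0 : Fin k → ℝ) ∈ S ∩ -S := hS.inter ▸ Set.mem_singleton 0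
  have htot : ∀ x, x ∈ S ∨ -x ∈ S := fun x => (hS.union ▸ Set.mem_univ x : x ∈ S ∪ -S)
  refine ⟨⟨h0.1, Lam.zero_mem⟩, fun x hx y hy => ⟨hS.add_mem x hx.1 y hy.1, Lam.add_mem hx.2 hy.2⟩,
    fun x hx y hy => ?_, fun x hx hx' => ?_⟩
  · rcases htot (x - y) with h | h
    · exact Or.inl ⟨h, Lam.sub_mem hx.2 hy.2⟩
    · rw [neg_sub] at h
      exact Or.inr ⟨h, Lam.sub_mem hy.2 hx.2⟩
  · have h1 : x ∈ S ∩ -S := ⟨hx.1, hx'.1⟩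
    rwa [hS.inter] at h1

theorem isSymbol_of_representsToeplitz {S Λ : Set (Fin k → ℝ)}
    {F : Matrix (Fin m) (Fin n) (APB k)} (hF : ∀ i j, APWmem k (S ∩ Λ) (F i j))
    {T : BesCol k n (S ∩ Λ) →L[ℂ] BesCol k m (S ∩ Λ)} (hT : RepresentsToeplitz k S Λ m n F T) :
    IsSymbol (fun i j => bohrCoeff k (F i j)) T := by
  refine ⟨fun i j => (hF i j).2, fun i j x hx => (hF i j).1.2 hx, fun q r => ?_⟩
  have h := hT q.1 q.2 r.1 r.2
  rw [← bas_eq, ← bas_eq, inner_bas_left] at h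
  exact h

end ToeplitzCorona

open ToeplitzCorona in
/-- **Theorem 5.1, sufficiency part.**  Let `S ⊂ ℝ^k` be a halfspace,
`A ∈ (APW^k_S)^{p×m}`, `B ∈ (APW^k_S)^{p×p}` invertible in `(APW^k)^{p×p}`,
`γ > 0`, `A` and `B` left coprime over `APW^k_S`, and `Λ'` an additive
subgroup of `ℝ^k` containing `σ(A) ∪ σ(B)`.  If the operator
`T(A) T(A)* − γ⁻² T(B) T(B)*` is positive definite and invertible, then there
exists `F ∈ (APW^k_{S∩Λ'})^{m×p}` with `sup_t ‖F(t)‖ ≤ γ` and `A F = B`. -/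
theorem toeplitz_corona_sufficiency (k p m : ℕ)
    (S : Set (Fin k → ℝ)) (hS : IsHalfspace k S)
    (A : Matrix (Fin p) (Fin m) (APB k)) (hA : ∀ i j, APWmem k S (A i j))
    (B : Matrix (Fin p) (Fin p) (APB k)) (hB : ∀ i j, APWmem k S (B i j))
    (hBinv : ∃ Binv : Matrix (Fin p) (Fin p) (APB k),
      (∀ i j, APWmem k Set.univ (Binv i j)) ∧ B * Binv = 1 ∧ Binv * B = 1)
    (γ : ℝ) (hγ : 0 < γ)
    (hcoprime : ∃ (Y₁ : Matrix (Fin m) (Fin p) (APB k))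
        (Y₂ : Matrix (Fin p) (Fin p) (APB k)),
      (∀ i j, APWmem k S (Y₁ i j)) ∧ (∀ i j, APWmem k S (Y₂ i j)) ∧
      A * Y₁ + B * Y₂ = 1)
    (Lam : AddSubgroup (Fin k → ℝ))
    (hLamA : ∀ i j, bohrSpectrum k (⇑(A i j)) ⊆ ↑Lam)
    (hLamB : ∀ i j, bohrSpectrum k (⇑(B i j)) ⊆ ↑Lam)
    (TA : BesCol k m (S ∩ ↑Lam) →L[ℂ] BesCol k p (S ∩ ↑Lam))
    (TB : BesCol k p (S ∩ ↑Lam) →L[ℂ] BesCol k p (S ∩ ↑Lam))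
    (hTA : RepresentsToeplitz k S (↑Lam) p m A TA)
    (hTB : RepresentsToeplitz k S (↑Lam) p p B TB)
    (hpos : (TA.comp (ContinuousLinearMap.adjoint TA) -
        ((γ : ℂ) ^ 2)⁻¹ • TB.comp (ContinuousLinearMap.adjoint TB)).IsPositive)
    (hposdef : ∀ v : BesCol k p (S ∩ ↑Lam), v ≠ 0 →
      0 < (inner ℂ v ((TA.comp (ContinuousLinearMap.adjoint TA) -
        ((γ : ℂ) ^ 2)⁻¹ • TB.comp (ContinuousLinearMap.adjoint TB)) v) : ℂ).re)
    (hinv : CLMInvertible (TA.comp (ContinuousLinearMap.adjoint TA) -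
        ((γ : ℂ) ^ 2)⁻¹ • TB.comp (ContinuousLinearMap.adjoint TB))) :
    ∃ F : Matrix (Fin m) (Fin p) (APB k),
      (∀ i j, APWmem k (S ∩ ↑Lam) (F i j)) ∧
      MatrixSupOpNormLE k m p F γ ∧ A * F = B := by
  have hA' : ∀ i j, APWmem k (S ∩ ↑Lam) (A i j) := fun i j =>
    ⟨⟨(hA i j).1.1, fun lam h => ⟨(hA i j).1.2 h, hLamA i j h⟩⟩, (hA i j).2⟩
  have hB' : ∀ i j, APWmem k (S ∩ ↑Lam) (B i j) := fun i j =>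
    ⟨⟨(hB i j).1.1, fun lam h => ⟨(hB i j).1.2 h, hLamB i j h⟩⟩, (hB i j).2⟩
  have hD : defect TA TB ((γ ^ 2)⁻¹) = TA.comp (ContinuousLinearMap.adjoint TA) -
      ((γ : ℂ) ^ 2)⁻¹ • TB.comp (ContinuousLinearMap.adjoint TB) := by
    rw [defect, Complex.ofReal_inv, Complex.ofReal_pow]
  obtain ⟨Dinv, hl, hr⟩ := hinv
  have hγ2 : 0 < γ ^ 2 := by positivity
  obtain ⟨F, hF, hb, hAF⟩ := Setup.exists_solution hA' hB' (inv_nonneg.2 hγ2.le)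
    { cone := isCone_inter hS Lam
      symbA := isSymbol_of_representsToeplitz hA' hTA
      symbB := isSymbol_of_representsToeplitz hB' hTB
      pos := by rwa [hD]
      unit := by
        rw [hD]
        exact isUnit_iff_exists.2 ⟨Dinv, hr, hl⟩ }
  refine ⟨Matrix.of F, hF, fun s v => ?_, Matrix.ext fun i j => hAF i j⟩
  refine Real.sqrt_le_iff.2 ⟨by positivity, ?_⟩
  rw [mul_pow, Real.sq_sqrt (Finset.sum_nonneg fun _ _ => sq_nonneg _), ← inv_mul_le_iff₀ hγ2]
  exact hb s v
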